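/- arXiv:1606.09389 — 4 statements merged into one kernel-verified Lean document; each statement's English description precedes it below -/
import Mathlib

section
/- Every finite Eulerian bipartite graph G (i.e., a bipartite graph in which every vertex has even degree) with maximum degree Δ(G) ≤ 8 has a cyclic interval Δ(G)-coloring. -/
open SimpleGraph

/-- The set of colors appearing on edges incident to `v` under the edge coloring `c`. -/
def colorsAt {V : Type*} (G : SimpleGraph V) (c : Sym2 V → ℕ) (v : V) : Set ℕ :=
  c '' (G.incidenceSet v)

/-- A set of natural numbers is an interval of consecutive integers. -/
def IsIntervalSet (S : Set ℕ) : Prop := ∃ a b : ℕ, S = Set.Icc a b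

/-- A proper edge coloring of `G` with colors `1, …, t`: every edge gets a color in
`{1, …, t}` and distinct edges sharing a vertex get distinct colors. -/
def IsProperEdgeColoring {V : Type*} (G : SimpleGraph V) (t : ℕ) (c : Sym2 V → ℕ) : Prop :=
  (∀ e ∈ G.edgeSet, c e ∈ Set.Icc 1 t) ∧
  ∀ e₁ ∈ G.edgeSet, ∀ e₂ ∈ G.edgeSet, e₁ ≠ e₂ → (∃ v, v ∈ e₁ ∧ v ∈ e₂) → c e₁ ≠ c e₂

/-- A cyclic interval `t`-coloring of `G`: a proper edge coloring with colors `1, …, t`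
such that at every vertex the set of incident colors, or its complement in `{1, …, t}`,
is an interval of consecutive integers. -/
def IsCyclicIntervalColoring {V : Type*} (G : SimpleGraph V) (t : ℕ) (c : Sym2 V → ℕ) : Prop :=
  IsProperEdgeColoring G t c ∧
  ∀ v : V, IsIntervalSet (colorsAt G c v) ∨ IsIntervalSet (Set.Icc 1 t \ colorsAt G c v)

/-!
By Kőnig's theorem, the edges of a bipartite multigraph whose degrees are all divisible by `k` split
into `k` parts in which every degree is divided by `k`.

For `k = 2` this halves the star of every vertex of `G`, which orients `G` so that every out-degree
equals the in-degree. Reading tails and heads as the two sides of a bipartite multigraph, and adding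
loops, the same result with `k = t / 2` cuts `G` into `k` classes of disjoint directed cycles. These
cycles are even, so class `i` can be colored alternately with `2 * i + 1` and `2 * i + 2`, and the
colors at `v` form a cyclic interval as soon as the classes at `v` do.

For `k ≤ 3` every set of classes is a cyclic interval. For `k = 4` the exceptions are `{0, 2}` and
`{1, 3}`: classes of the same parity at a vertex of out-degree two. They are avoided by first
splitting the arcs, as evenly as possible at every vertex, into two parts, and then each part into
two classes of one parity.
-/

section BipartiteMultigraph

open Finset Function

variable {E A B : Type*}

/-- Adds a matching `M`, as a new last color class, to a coloring of the other edges. -/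
def extendColoring {k : ℕ} (M : Set E) [DecidablePred (· ∈ M)]
    (c : {e // e ∉ M} → Fin k) (e : E) : Fin (k + 1) :=
  if h : e ∈ M then Fin.last k else (c ⟨e, h⟩).castSucc

lemma injective_extendColoring {k : ℕ} {f : E → A} {M : Set E} [DecidablePred (· ∈ M)]
    (hM : Set.InjOn f M) {c : {e // e ∉ M} → Fin k}
    (hc : Injective fun e : {e // e ∉ M} ↦ (f e, c e)) :
    Injective fun e ↦ (f e, extendColoring M c e) := by
  intro e e' h
  obtain ⟨hf, hcol⟩ := Prod.mk.inj h
  unfold extendColoring at hcol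
  split_ifs at hcol with he he' he'
  · exact hM he he' hf
  · exact absurd hcol.symm (Fin.castSucc_ne_last _)
  · exact absurd hcol (Fin.castSucc_ne_last _)
  · exact congrArg Subtype.val (hc (Prod.ext hf (Fin.castSucc_injective k hcol)))

variable [Fintype E] [DecidableEq A]

lemma card_fiber_notMem_eq_of_bijOn {f : E → A} {k : ℕ} (hf : ∀ a, #{e | f e = a} = k + 1)
    {M : Set E} [DecidablePred (· ∉ M)] (hM : Set.BijOn f M Set.univ) (a : A) :
    #{e : {e // e ∉ M} | f e = a} = k := by
  classical
  obtain ⟨g, hgM, rfl⟩ := hM.surjOn (Set.mem_univ a)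
  have herase : ({e : {e // e ∉ M} | f e = f g} : Finset _).map (Embedding.subtype _) =
      ({e | f e = f g} : Finset E).erase g := by
    ext e
    simp only [mem_map, mem_filter_univ, mem_erase, Embedding.subtype_apply, Subtype.exists]
    constructor
    · rintro ⟨e', he', hfe, rfl⟩
      exact ⟨by rintro rfl; exact he' hgM, hfe⟩
    · rintro ⟨hne, hfe⟩
      exact ⟨e, fun heM ↦ hne (hM.injOn heM hgM hfe), hfe, rfl⟩
  rw [← card_map (Embedding.subtype _), herase, card_erase_of_mem (by simp), hf,
    Nat.add_sub_cancel]

lemma exists_refinement_card_fiber_eq {l : E → A} {k : ℕ} (hl : ∀ a, k ∣ #{e | l e = a}) :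
    ∃ (m : A → ℕ) (l' : E → Σ a, Fin (m a)), (∀ e, (l' e).1 = l e) ∧
      ∀ x, #{e | l' e = x} = k := by
  choose m hm using hl
  let block (a : A) : {e // l e = a} ≃ Fin (m a) × Fin k :=
    Fintype.equivOfCardEq (by simp [Fintype.card_subtype, hm, mul_comm])
  let ψ : E ≃ (Σ a, Fin (m a)) × Fin k := (Equiv.sigmaFiberEquiv l).symm.trans <|
    (Equiv.sigmaCongrRight block).trans (Equiv.sigmaProdDistrib _ _).symm
  refine ⟨m, fun e ↦ (ψ e).1, fun e ↦ rfl, fun x ↦ ?_⟩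
  have : #{e | (ψ e).1 = x} = #({x} ×ˢ univ : Finset ((Σ a, Fin (m a)) × Fin k)) :=
    card_equiv ψ fun e ↦ by
      simp only [mem_filter_univ, mem_product, mem_singleton, mem_univ, and_true]
  simpa using this

lemma card_filter_mem_of_card_fiber_eq {l : E → A} {k : ℕ}
    (hl : ∀ a, #{e | l e = a} = k) (S : Finset A) : #{e | l e ∈ S} = #S * k := by
  rw [← sum_card_fiberwise_eq_card_filter, sum_const_nat fun a _ ↦ hl a]

lemma mul_card_filter_and_eq_of_bijective {A' : Type*} [Finite A'] {l : E → A'} {k : ℕ}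
    {c : E → Fin k} (hc : Bijective fun e ↦ (l e, c e)) (p : A' → A) (a : A) (i : Fin k) :
    k * #{e | p (l e) = a ∧ c e = i} = #{e | p (l e) = a} := by
  cases nonempty_fintype A'
  have hclass : #{e | p (l e) = a ∧ c e = i} = #(({x | p x = a} : Finset A') ×ˢ {i}) :=
    card_bijective _ hc fun e ↦ by simp only [mem_filter_univ, mem_product, mem_singleton]
  have hall : #{e | p (l e) = a} =
      #(({x | p x = a} : Finset A') ×ˢ (univ : Finset (Fin k))) :=
    card_bijective _ hc fun e ↦ by simp only [mem_filter_univ, mem_product, mem_univ, and_true]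
  rw [hclass, hall, card_product, card_product, card_singleton, mul_one, card_fin, mul_comm]

lemma card_eq_mul_of_card_fiber_eq [Fintype A] {l : E → A} {k : ℕ} (hl : ∀ a, #{e | l e = a} = k) :
    Fintype.card E = Fintype.card A * k := by
  simpa using card_filter_mem_of_card_fiber_eq hl univ

variable [Finite A] [Finite B] [DecidableEq B]

lemma exists_perfectMatching_of_card_fiber_eq {l : E → A} {r : E → B} {k : ℕ} (hk : k ≠ 0)
    (hl : ∀ a, #{e | l e = a} = k) (hr : ∀ b, #{e | r e = b} = k) :
    ∃ M : Set E, Set.BijOn l M Set.univ ∧ Set.BijOn r M Set.univ := by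
  classical
  cases nonempty_fintype A
  cases nonempty_fintype B
  have hall (S : Finset A) : #S ≤ #{b | ∃ a ∈ S, ∃ e, l e = a ∧ r e = b} := by
    refine Nat.le_of_mul_le_mul_right ?_ (Nat.pos_of_ne_zero hk)
    rw [← card_filter_mem_of_card_fiber_eq hl, ← card_filter_mem_of_card_fiber_eq hr]
    refine card_le_card fun e he ↦ ?_
    simp only [mem_filter_univ] at he ⊢
    exact ⟨l e, he, e, rfl, rfl⟩
  obtain ⟨f, hf, hlr⟩ := (Fintype.all_card_le_filter_rel_iff_exists_injective
    fun a b ↦ ∃ e, l e = a ∧ r e = b).1 hall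
  choose g hgl hgr using hlr
  have hcard : Fintype.card A = Fintype.card B := Nat.eq_of_mul_eq_mul_right
    (Nat.pos_of_ne_zero hk)
    ((card_eq_mul_of_card_fiber_eq hl).symm.trans (card_eq_mul_of_card_fiber_eq hr))
  have hf_surj : Surjective f := ((Fintype.bijective_iff_injective_and_card f).2 ⟨hf, hcard⟩).2
  refine ⟨Set.range g, ⟨Set.mapsTo_univ _ _, ?_, fun a _ ↦ ⟨g a, ⟨a, rfl⟩, hgl a⟩⟩,
    Set.mapsTo_univ _ _, ?_, fun b _ ↦ ?_⟩
  · rintro _ ⟨a, rfl⟩ _ ⟨a', rfl⟩ h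
    rw [← hgl a, ← hgl a', h]
  · rintro _ ⟨a, rfl⟩ _ ⟨a', rfl⟩ h
    rw [hf (by rwa [hgr, hgr] at h : f a = f a')]
  · obtain ⟨a, rfl⟩ := hf_surj b
    exact ⟨g a, ⟨a, rfl⟩, hgr a⟩

/-- **Kőnig's edge coloring theorem** for regular bipartite multigraphs: `e` joins `l e` to `r e`,
and every color class is a perfect matching. -/
theorem exists_bijective_coloring_of_card_fiber_eq {l : E → A} {r : E → B} {k : ℕ}
    (hl : ∀ a, #{e | l e = a} = k) (hr : ∀ b, #{e | r e = b} = k) :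
    ∃ c : E → Fin k, Bijective (fun e ↦ (l e, c e)) ∧ Bijective (fun e ↦ (r e, c e)) := by
  cases nonempty_fintype A
  cases nonempty_fintype B
  suffices ∃ c : E → Fin k, Injective (fun e ↦ (l e, c e)) ∧ Injective (fun e ↦ (r e, c e)) by
    simpa only [Fintype.bijective_iff_injective_and_card, Fintype.card_prod, Fintype.card_fin,
      ← card_eq_mul_of_card_fiber_eq hl, ← card_eq_mul_of_card_fiber_eq hr, and_true] using this
  classical
  induction k generalizing E with
  | zero =>
    have : IsEmpty E := Fintype.card_eq_zero_iff.1 (card_eq_mul_of_card_fiber_eq hl)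
    exact ⟨isEmptyElim, injective_of_subsingleton _, injective_of_subsingleton _⟩
  | succ k ih =>
    obtain ⟨M, hMl, hMr⟩ := exists_perfectMatching_of_card_fiber_eq k.succ_ne_zero hl hr
    obtain ⟨c, hcl, hcr⟩ := ih (l := fun e : {e // e ∉ M} ↦ l e) (r := fun e ↦ r e)
      (card_fiber_notMem_eq_of_bijOn hl hMl) (card_fiber_notMem_eq_of_bijOn hr hMr)
    exact ⟨extendColoring M c, injective_extendColoring hMl.injOn hcl,
      injective_extendColoring hMr.injOn hcr⟩

theorem exists_coloring_mul_card_eq {l : E → A} {r : E → B} {k : ℕ}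
    (hl : ∀ a, k ∣ #{e | l e = a}) (hr : ∀ b, k ∣ #{e | r e = b}) :
    ∃ c : E → Fin k, (∀ a i, k * #{e | l e = a ∧ c e = i} = #{e | l e = a}) ∧
      ∀ b i, k * #{e | r e = b ∧ c e = i} = #{e | r e = b} := by
  obtain ⟨m, l', hl', hlk⟩ := exists_refinement_card_fiber_eq hl
  obtain ⟨n, r', hr', hrk⟩ := exists_refinement_card_fiber_eq hr
  obtain ⟨c, hcl, hcr⟩ := exists_bijective_coloring_of_card_fiber_eq hlk hrk
  simp only [← hl', ← hr']
  exact ⟨c, mul_card_filter_and_eq_of_bijective hcl Sigma.fst,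
    mul_card_filter_and_eq_of_bijective hcr Sigma.fst⟩

end BipartiteMultigraph

section DirectedMultigraph

open Finset Function

variable {E V κ ι : Type*}

/-- In the directed multigraph whose arc `e` runs from `tl e` to `hd e`, every color class of `c`
is a disjoint union of directed cycles: a vertex is the tail of at most one arc of each color, the
head of at most one, and it is a tail if and only if it is a head. -/
structure IsCycleColoring (tl hd : E → V) (c : E → κ) : Prop where
  injective_tail : Injective fun e ↦ (tl e, c e)
  injective_head : Injective fun e ↦ (hd e, c e)
  exists_tail_iff : ∀ v i, (∃ e, tl e = v ∧ c e = i) ↔ ∃ e, hd e = v ∧ c e = i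

lemma IsCycleColoring.comp {tl hd : E → V} {c : E → κ} (hc : IsCycleColoring tl hd c)
    (f : κ ≃ ι) : IsCycleColoring tl hd (f ∘ c) where
  injective_tail := by
    simpa [Injective, Prod.ext_iff] using hc.injective_tail
  injective_head := by
    simpa [Injective, Prod.ext_iff] using hc.injective_head
  exists_tail_iff v i := by
    simpa [← f.eq_symm_apply] using hc.exists_tail_iff v (f.symm i)

lemma IsCycleColoring.prodMk {tl hd : E → V} {c : E → κ} {h : E → ι}
    (hc : IsCycleColoring (fun e ↦ (tl e, h e)) (fun e ↦ (hd e, h e)) c) :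
    IsCycleColoring tl hd fun e ↦ (c e, h e) where
  injective_tail e e' he := hc.injective_tail (by grind)
  injective_head e e' he := hc.injective_head (by grind)
  exists_tail_iff v i := by
    simpa only [Prod.ext_iff, and_assoc, and_comm (a := h _ = _)] using
      hc.exists_tail_iff (v, i.2) i.1

lemma card_filter_sumElim {L : Type*} [Fintype E] [Fintype L] [DecidableEq V] (f : E → V)
    (g : L → V) (v : V) : #{x | Sum.elim f g x = v} = #{e | f e = v} + #{y | g y = v} := by
  rw [← card_toLeft_add_card_toRight]
  congr 2 <;> ext <;> simp

lemma card_filter_sumElim_and {L : Type*} [Fintype E] [Fintype L] [DecidableEq V] (f : E → V)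
    (g : L → V) (v : V) (Q : E ⊕ L → Prop) [DecidablePred Q] :
    #{x | Sum.elim f g x = v ∧ Q x} =
      #{e | f e = v ∧ Q (.inl e)} + #{y | g y = v ∧ Q (.inr y)} := by
  rw [← card_toLeft_add_card_toRight]
  congr 2 <;> ext <;> simp

lemma exists_lt_dvd_add (m k : ℕ) [NeZero k] : ∃ r < k, k ∣ m + r := by
  refine ⟨(k * m - m) % k, Nat.mod_lt _ (NeZero.pos k), Nat.dvd_of_mod_eq_zero ?_⟩
  rw [Nat.add_mod_mod, Nat.add_sub_cancel' (Nat.le_mul_of_pos_left m (NeZero.pos k)),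
    Nat.mul_mod_right]

variable [Fintype E] [DecidableEq V] {tl hd : E → V}

lemma isCycleColoring_of_card_le_one [DecidableEq κ] {c : E → κ}
    (hbal : ∀ v i, #{e | tl e = v ∧ c e = i} = #{e | hd e = v ∧ c e = i})
    (hle : ∀ v i, #{e | tl e = v ∧ c e = i} ≤ 1) : IsCycleColoring tl hd c where
  injective_tail e e' h := by
    obtain ⟨ht, hc⟩ := Prod.mk.inj h
    exact card_le_one.1 (hle (tl e') (c e')) e (by simp [ht, hc]) e' (by simp)
  injective_head e e' h := by
    obtain ⟨hh, hc⟩ := Prod.mk.inj h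
    exact card_le_one.1 (hbal (hd e') (c e') ▸ hle (hd e') (c e')) e (by simp [hh, hc]) e' (by simp)
  exists_tail_iff v i := by
    have h : 0 < #{e | tl e = v ∧ c e = i} ↔ 0 < #{e | hd e = v ∧ c e = i} := by rw [hbal]
    simpa [card_pos, filter_nonempty_iff] using h

variable [Finite V]

theorem exists_balanced_coloring (hbal : ∀ v, #{e | tl e = v} = #{e | hd e = v})
    (k : ℕ) [NeZero k] :
    ∃ c : E → Fin k, ∀ v i, #{e | tl e = v ∧ c e = i} = #{e | hd e = v ∧ c e = i} ∧
      k * #{e | tl e = v ∧ c e = i} < #{e | tl e = v} + k := by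
  cases nonempty_fintype V
  -- Adding `r v < k` loops at each vertex `v` makes all degrees divisible by `k`, and a loop
  -- contributes equally to the out-degree and the in-degree within its color class.
  choose r hrk hr using fun v ↦ exists_lt_dvd_add #{e | tl e = v} k
  have hloops (v : V) : #{y : Σ v, Fin (r v) | y.1 = v} = r v := by
    rw [← Fintype.card_subtype, Fintype.card_congr (Equiv.sigmaSubtype v), Fintype.card_fin]
  obtain ⟨c, htl, hhd⟩ := exists_coloring_mul_card_eq (k := k)
    (l := Sum.elim tl (Sigma.fst : (Σ v, Fin (r v)) → V)) (r := Sum.elim hd Sigma.fst)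
    (fun v ↦ by simpa only [card_filter_sumElim, hloops] using hr v)
    (fun v ↦ by simpa only [card_filter_sumElim, hloops, ← hbal] using hr v)
  simp only [card_filter_sumElim, card_filter_sumElim_and, hloops, ← hbal] at htl hhd
  refine ⟨c ∘ .inl, fun v i ↦ ⟨?_, ?_⟩⟩
  · have := Nat.eq_of_mul_eq_mul_left (NeZero.pos k) ((htl v i).trans (hhd v i).symm)
    exact Nat.add_right_cancel this
  · exact (Nat.mul_le_mul_left k (Nat.le_add_right _ _)).trans_lt
      ((htl v i).trans_lt (Nat.add_lt_add_left (hrk v) _))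

theorem exists_isCycleColoring (hbal : ∀ v, #{e | tl e = v} = #{e | hd e = v}) {k : ℕ}
    (hle : ∀ v, #{e | tl e = v} ≤ k) : ∃ c : E → Fin k, IsCycleColoring tl hd c := by
  obtain rfl | hk := eq_or_ne k 0
  · have : IsEmpty E := ⟨fun e ↦ (card_pos.2 ⟨e, by simp⟩).not_ge (hle (tl e))⟩
    exact ⟨isEmptyElim, injective_of_subsingleton _, injective_of_subsingleton _, by simp⟩
  · have : NeZero k := ⟨hk⟩
    obtain ⟨c, hc⟩ := exists_balanced_coloring hbal k
    refine ⟨c, isCycleColoring_of_card_le_one (fun v i ↦ (hc v i).1) fun v i ↦ ?_⟩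
    have : k * #{e | tl e = v ∧ c e = i} < k * 2 := by linarith [(hc v i).2, hle v]
    exact Nat.lt_succ_iff.1 (Nat.lt_of_mul_lt_mul_left this)

theorem exists_isCycleColoring_prod (hbal : ∀ v, #{e | tl e = v} = #{e | hd e = v}) {k n : ℕ}
    [NeZero n] (hle : ∀ v, #{e | tl e = v} ≤ k * n) :
    ∃ c : E → Fin k × Fin n, IsCycleColoring tl hd c ∧
      ∀ v j, n * #{e | tl e = v ∧ (c e).2 = j} < #{e | tl e = v} + n := by
  obtain ⟨h, hh⟩ := exists_balanced_coloring hbal n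
  obtain ⟨c, hc⟩ := exists_isCycleColoring (tl := fun e ↦ (tl e, h e)) (hd := fun e ↦ (hd e, h e))
    (k := k) (fun v ↦ by simpa [Prod.ext_iff] using (hh v.1 v.2).1) fun v ↦ by
      have : n * #{e | tl e = v.1 ∧ h e = v.2} < n * (k + 1) := by
        linarith [(hh v.1 v.2).2, hle v.1]
      simpa [Prod.ext_iff] using Nat.lt_succ_iff.1 (Nat.lt_of_mul_lt_mul_left this)
  exact ⟨fun e ↦ (c e, h e), hc.prodMk, fun v j ↦ (hh v j).2⟩

end DirectedMultigraph

section CyclicInterval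

open Finset

/-- The condition that a cyclic interval `t`-coloring imposes on the set `S` of colors at a
vertex. -/
def IsCyclicIntervalSet (t : ℕ) (S : Set ℕ) : Prop :=
  IsIntervalSet S ∨ IsIntervalSet (Set.Icc 1 t \ S)

lemma preimage_succ_div_two_Icc (a b : ℕ) :
    (fun x ↦ (x + 1) / 2) ⁻¹' Set.Icc a b = Set.Icc (2 * a - 1) (2 * b) := by
  ext x
  simp only [Set.mem_preimage, Set.mem_Icc]
  lia

lemma IsIntervalSet.preimage_succ_div_two {S : Set ℕ} (hS : IsIntervalSet S) :
    IsIntervalSet ((fun x ↦ (x + 1) / 2) ⁻¹' S) := by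
  obtain ⟨a, b, rfl⟩ := hS
  exact ⟨2 * a - 1, 2 * b, preimage_succ_div_two_Icc a b⟩

lemma IsCyclicIntervalSet.preimage_succ_div_two {k : ℕ} {S : Set ℕ}
    (hS : IsCyclicIntervalSet k S) :
    IsCyclicIntervalSet (2 * k) ((fun x ↦ (x + 1) / 2) ⁻¹' S) := by
  unfold IsCyclicIntervalSet
  rw [← preimage_succ_div_two_Icc 1 k, ← Set.preimage_sdiff]
  exact hS.imp IsIntervalSet.preimage_succ_div_two IsIntervalSet.preimage_succ_div_two

lemma isCyclicIntervalSet_coe_iff {t : ℕ} {S : Finset ℕ} : IsCyclicIntervalSet t S ↔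
    ∃ a b, S = Icc a b ∨ Icc 1 t \ S = Icc a b := by
  simp only [IsCyclicIntervalSet, IsIntervalSet, exists_or, ← coe_inj, coe_sdiff,
    coe_Icc]

lemma isCyclicIntervalSet_of_le_three {k : ℕ} (hk : k ≤ 3) (C : Set (Fin k)) :
    IsCyclicIntervalSet k ((fun i : Fin k ↦ (i : ℕ) + 1) '' C) := by
  lift C to Finset (Fin k) using C.toFinite
  rw [← coe_image]
  suffices ∃ a b : Fin 5, C.image (fun i : Fin k ↦ (i : ℕ) + 1) = Icc ↑a ↑b ∨
      Icc 1 k \ C.image (fun i : Fin k ↦ (i : ℕ) + 1) = Icc ↑a ↑b by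
    obtain ⟨a, b, h⟩ := this
    exact isCyclicIntervalSet_coe_iff.2 ⟨a, b, h⟩
  revert C
  interval_cases k <;> decide

-- `x.2` is the parity of `finProdFinEquiv x`, so the bound excludes exactly the images
-- `{1, 3}` and `{2, 4}`.
lemma isCyclicIntervalSet_four_of_balanced {C : Finset (Fin 2 × Fin 2)}
    (hC : ∀ j, 2 * #{x ∈ C | x.2 = j} < #C + 2) :
    IsCyclicIntervalSet 4 (C.image fun x ↦ (finProdFinEquiv x : ℕ) + 1) := by
  suffices ∃ a b : Fin 5, C.image (fun x ↦ (finProdFinEquiv x : ℕ) + 1) = Icc ↑a ↑b ∨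
      Icc 1 4 \ C.image (fun x ↦ (finProdFinEquiv x : ℕ) + 1) = Icc ↑a ↑b by
    obtain ⟨a, b, h⟩ := this
    exact isCyclicIntervalSet_coe_iff.2 ⟨a, b, h⟩
  revert C
  decide

end CyclicInterval

section CyclicIntervalTails

open Finset Function

variable {E V : Type*} [Fintype E] [DecidableEq V]

lemma isCyclicIntervalSet_four_image_of_balanced {f : E → V} {c : E → Fin 2 × Fin 2}
    (hc : Injective fun e ↦ (f e, c e)) (v : V)
    (hbal : ∀ j, 2 * #{e | f e = v ∧ (c e).2 = j} < #{e | f e = v} + 2) :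
    IsCyclicIntervalSet 4 ((fun e ↦ (finProdFinEquiv (c e) : ℕ) + 1) '' {e | f e = v}) := by
  have hinj : Set.InjOn c {e | f e = v} := fun e he e' he' h ↦
    hc (Prod.ext (he.trans he'.symm) h)
  have hcard (F : Finset E) (hF : F ⊆ ({e | f e = v} : Finset E)) : #(F.image c) = #F :=
    card_image_of_injOn (hinj.mono fun e he ↦ by simpa using hF he)
  simpa [Set.image_image] using isCyclicIntervalSet_four_of_balanced
    (C := ({e | f e = v} : Finset E).image c) fun j ↦ by
      rw [filter_image, hcard _ (filter_subset _ _), hcard _ Subset.rfl, filter_filter]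
      exact hbal j

theorem exists_isCycleColoring_isCyclicIntervalSet [Finite V] {tl hd : E → V}
    (hbal : ∀ v, #{e | tl e = v} = #{e | hd e = v}) {k : ℕ} (hk : k ≤ 4)
    (hle : ∀ v, #{e | tl e = v} ≤ k) :
    ∃ c : E → Fin k, IsCycleColoring tl hd c ∧
      ∀ v, IsCyclicIntervalSet k ((fun e ↦ (c e : ℕ) + 1) '' {e | tl e = v}) := by
  obtain hk | rfl := Nat.lt_or_eq_of_le hk
  · obtain ⟨c, hc⟩ := exists_isCycleColoring hbal hle
    exact ⟨c, hc, fun v ↦ by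
      simpa only [Set.image_image] using
        isCyclicIntervalSet_of_le_three (Nat.le_of_lt_succ hk) (c '' {e | tl e = v})⟩
  · obtain ⟨c, hc, hparity⟩ := exists_isCycleColoring_prod (k := 2) (n := 2) hbal hle
    exact ⟨_, hc.comp finProdFinEquiv, fun v ↦
      isCyclicIntervalSet_four_image_of_balanced hc.injective_tail v (hparity v)⟩

end CyclicIntervalTails

section OrientedEnds

open Finset Function

variable {E V κ : Type*} {p : Bool → E → V} {b : E → Bool}

/-- For a bipartite multigraph in which `e` joins `p false e` to `p true e`: the end of `e` on the
side `b e`, with its side. An orientation from tails `endAt p b` to heads `endAt p (!b ·)` is thus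
encoded by `b`. -/
def endAt (p : Bool → E → V) (b : E → Bool) (e : E) : V × Bool := (p (b e) e, b e)

lemma endAt_eq_iff {e : E} {x : V × Bool} : endAt p b e = x ↔ p x.2 e = x.1 ∧ b e = x.2 := by
  rw [endAt, Prod.ext_iff]
  exact and_congr_left fun h : b e = x.2 ↦ by rw [h]

lemma IsCycleColoring.eq_of_endAt {c : E → κ}
    (hc : IsCycleColoring (endAt p b) (endAt p fun e ↦ !b e) c) {s : Bool} {e e' : E}
    (hp : p s e = p s e') (hce : c e = c e') (hb : b e = b e') : e = e' := by
  obtain rfl | rfl := Bool.eq_or_eq_not s (b e)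
  · exact hc.injective_tail (Prod.ext (by simp [endAt, ← hb, hp]) hce)
  · exact hc.injective_head (Prod.ext (by simp [endAt, ← hb, hp]) hce)

lemma IsCycleColoring.exists_endAt {c : E → κ}
    (hc : IsCycleColoring (endAt p b) (endAt p fun e ↦ !b e) c) (s : Bool) (e : E) (x : Bool) :
    ∃ e', p s e' = p s e ∧ c e' = c e ∧ b e' = x := by
  have hiff := hc.exists_tail_iff (p s e, s) (c e)
  simp only [endAt_eq_iff, and_assoc, and_comm (a := b _ = _), Bool.not_eq_eq_eq_not] at hiff
  obtain rfl | rfl := Bool.eq_or_eq_not x (b e)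
  · exact ⟨e, rfl, rfl, rfl⟩
  obtain rfl | rfl := Bool.eq_or_eq_not s (b e)
  · exact hiff.1 ⟨e, rfl, rfl, rfl⟩
  · exact hiff.2 ⟨e, rfl, rfl, (Bool.not_not _).symm⟩

lemma IsCycleColoring.image_endAt {c : E → κ}
    (hc : IsCycleColoring (endAt p b) (endAt p fun e ↦ !b e) c) (s : Bool) (v : V) :
    c '' {e | endAt p b e = (v, s)} = c '' {e | p s e = v} := by
  refine (Set.image_mono fun e he ↦ (endAt_eq_iff.1 he).1).antisymm ?_
  rintro _ ⟨e, he : p s e = v, rfl⟩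
  obtain ⟨e', hp', hc', hb'⟩ := hc.exists_endAt s e s
  exact ⟨e', endAt_eq_iff.2 ⟨hp'.trans he, hb'⟩, hc'⟩

/-- The coloring obtained by splitting the `i`-th color class, `i = 0, 1, …`, into the two
colors `2 * i + 1` and `2 * i + 2`, according to `b`. -/
def splitColoring {k : ℕ} (c : E → Fin k) (b : E → Bool) (e : E) : ℕ :=
  2 * c e + (b e).toNat + 1

lemma splitColoring_eq_iff {k : ℕ} {c : E → Fin k} {e e' : E} :
    splitColoring c b e = splitColoring c b e' ↔ c e = c e' ∧ b e = b e' := by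
  unfold splitColoring
  cases b e <;> cases b e' <;> simp [Fin.ext_iff] <;> lia

lemma splitColoring_mem_Icc {k : ℕ} (c : E → Fin k) (b : E → Bool) (e : E) :
    splitColoring c b e ∈ Set.Icc 1 (2 * k) := by
  have := (b e).toNat_le
  simp only [splitColoring, Set.mem_Icc]
  lia

lemma splitColoring_image {k : ℕ} {c : E → Fin k} {S : Set E}
    (hS : ∀ e ∈ S, ∀ x, ∃ e' ∈ S, c e' = c e ∧ b e' = x) :
    splitColoring c b '' S =
      (fun x ↦ (x + 1) / 2) ⁻¹' ((fun i : Fin k ↦ (i : ℕ) + 1) '' (c '' S)) := by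
  ext x
  simp only [Set.mem_image, Set.mem_preimage, exists_exists_and_eq_and]
  constructor
  · rintro ⟨e, he, rfl⟩
    have := (b e).toNat_le
    exact ⟨e, he, by unfold splitColoring; lia⟩
  · rintro ⟨e, he, hx⟩
    obtain ⟨e', he', hc, hb⟩ := hS e he (decide (x = 2 * c e + 2))
    refine ⟨e', he', ?_⟩
    by_cases hx' : x = 2 * c e + 2 <;> simp [splitColoring, hc, hb, hx']; lia

variable [Fintype E] [Finite V] [DecidableEq V]

lemma exists_halving (heven : ∀ s v, Even #{e | p s e = v}) :
    ∃ b : E → Bool, ∀ s v x, 2 * #{e | p s e = v ∧ b e = x} = #{e | p s e = v} := by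
  obtain ⟨c, hfalse, htrue⟩ := exists_coloring_mul_card_eq
    (fun v ↦ (heven false v).two_dvd) (fun v ↦ (heven true v).two_dvd)
  refine ⟨finTwoEquiv ∘ c, fun s v x ↦ ?_⟩
  simp only [comp_apply, ← finTwoEquiv.eq_symm_apply]
  cases s
  exacts [hfalse v _, htrue v _]

theorem exists_coloring_isCyclicIntervalSet {k : ℕ} (hk : k ≤ 4)
    (heven : ∀ s v, Even #{e | p s e = v}) (hle : ∀ s v, #{e | p s e = v} ≤ 2 * k) :
    ∃ f : E → ℕ, (∀ e, f e ∈ Set.Icc 1 (2 * k)) ∧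
      ∀ s v, Set.InjOn f {e | p s e = v} ∧ IsCyclicIntervalSet (2 * k) (f '' {e | p s e = v}) := by
  obtain ⟨b, hb⟩ := exists_halving heven
  have htail (x : V × Bool) : 2 * #{e | endAt p b e = x} = #{e | p x.2 e = x.1} := by
    simpa only [endAt_eq_iff] using hb x.2 x.1 x.2
  have hhead (x : V × Bool) : 2 * #{e | endAt p (fun e ↦ !b e) e = x} = #{e | p x.2 e = x.1} := by
    simpa only [endAt_eq_iff, Bool.not_eq_eq_eq_not] using hb x.2 x.1 !x.2
  obtain ⟨c, hc, hcyc⟩ := exists_isCycleColoring_isCyclicIntervalSet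
    (tl := endAt p b) (hd := endAt p fun e ↦ !b e)
    (fun x ↦ by linarith [htail x, hhead x]) hk fun x ↦ by linarith [htail x, hle x.2 x.1]
  refine ⟨splitColoring c b, splitColoring_mem_Icc c b, fun s v ↦ ⟨?_, ?_⟩⟩
  · intro e he e' he' hee'
    obtain ⟨hce, hbe⟩ := splitColoring_eq_iff.1 hee'
    exact hc.eq_of_endAt (he.trans he'.symm) hce hbe
  · rw [splitColoring_image fun e he x ↦ ?_, ← hc.image_endAt, Set.image_image]
    · exact (hcyc (v, s)).preimage_succ_div_two
    · obtain ⟨e', hp', h⟩ := hc.exists_endAt s e x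
      exact ⟨e', hp'.trans he, h⟩

end OrientedEnds

section BipartiteGraph

open Finset

variable {V : Type*} {G : SimpleGraph V}

lemma image_val_setOf_mem (v : V) :
    Subtype.val '' {e : G.edgeSet | v ∈ (e : Sym2 V)} = G.incidenceSet v := by
  ext e
  simp [incidenceSet, and_comm]

lemma exists_isCyclicIntervalColoring {t : ℕ} {f : G.edgeSet → ℕ} (hf : ∀ e, f e ∈ Set.Icc 1 t)
    (hinj : ∀ v : V, Set.InjOn f {e | v ∈ (e : Sym2 V)})
    (hcyc : ∀ v : V, IsCyclicIntervalSet t (f '' {e | v ∈ (e : Sym2 V)})) :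
    ∃ c : Sym2 V → ℕ, IsCyclicIntervalColoring G t c := by
  have hext (e : G.edgeSet) : Function.extend Subtype.val f 0 e = f e :=
    Subtype.val_injective.extend_apply f 0 e
  have hcolors (v : V) :
      colorsAt G (Function.extend Subtype.val f 0) v = f '' {e | v ∈ (e : Sym2 V)} := by
    simp only [colorsAt, ← image_val_setOf_mem, Set.image_image, hext]
  refine ⟨Function.extend Subtype.val f 0, ⟨fun e he ↦ hext ⟨e, he⟩ ▸ hf _, ?_⟩, fun v ↦ ?_⟩
  · rintro e he e' he' hne ⟨v, hv, hv'⟩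
    rw [hext ⟨e, he⟩, hext ⟨e', he'⟩]
    exact fun h ↦ hne (congrArg Subtype.val (hinj v hv hv' h))
  · exact hcolors v ▸ hcyc v

lemma existsUnique_mem_edge_and_eq (C : G.Coloring Bool) (s : Bool) (e : G.edgeSet) :
    ∃! v, v ∈ (e : Sym2 V) ∧ C v = s := by
  obtain ⟨e, he⟩ := e
  induction e with | h u w =>
  have hC : C u ≠ C w := C.valid he
  simp only [Sym2.mem_iff]
  obtain hu | hu := eq_or_ne (C u) s
  · exact ⟨u, by grind, by grind⟩
  · have hw : C w = s := by rw [Bool.eq_not.2 hC.symm, Bool.eq_not.2 hu, Bool.not_not]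
    exact ⟨w, by grind, by grind⟩

lemma exists_ends (C : G.Coloring Bool) :
    ∃ p : Bool → G.edgeSet → V, ∀ s e v, p s e = v ↔ v ∈ (e : Sym2 V) ∧ C v = s := by
  choose p hp hunique using existsUnique_mem_edge_and_eq C
  exact ⟨p, fun s e v ↦ ⟨by rintro rfl; exact hp s e, fun h ↦ (hunique s e v h).symm⟩⟩

variable [Fintype V] [DecidableRel G.Adj]

lemma card_edges_eq_degree [DecidableEq V] (v : V) :
    #{e : G.edgeSet | v ∈ (e : Sym2 V)} = G.degree v := by
  rw [← card_incidenceFinset_eq_degree, ← card_map (Function.Embedding.subtype _)]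
  congr 1
  ext e
  simp [incidenceSet, and_comm]

lemma even_maxDegree (heven : ∀ v, Even (G.degree v)) : Even G.maxDegree := by
  obtain hV | hV := isEmpty_or_nonempty V
  · simp
  · obtain ⟨v, hv⟩ := G.exists_maximal_degree_vertex
    exact hv ▸ heven v

theorem stmt_6_general (hbip : G.Colorable 2) (heul : ∀ v, Even (G.degree v)) {t : ℕ}
    (ht : Even t) (ht8 : t ≤ 8) (hdeg : ∀ v, G.degree v ≤ t) :
    ∃ c : Sym2 V → ℕ, IsCyclicIntervalColoring G t c := by
  classical
  obtain ⟨k, rfl⟩ := ht.two_dvd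
  have C : G.Coloring Bool := hbip.toColoring (by simp)
  obtain ⟨p, hp⟩ := exists_ends C
  have hfiber (s : Bool) (v : V) :
      #{e | p s e = v} = if C v = s then G.degree v else 0 := by
    split_ifs with h <;> simp [hp, h, card_edges_eq_degree]
  obtain ⟨f, hf, hfv⟩ := exists_coloring_isCyclicIntervalSet (p := p) (k := k) (by lia)
    (fun s v ↦ by rw [hfiber]; split_ifs <;> simp [heul])
    (fun s v ↦ by rw [hfiber]; split_ifs <;> simp [hdeg])
  have hstar (v : V) : {e | p (C v) e = v} = {e : G.edgeSet | v ∈ (e : Sym2 V)} := by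
    simp [hp]
  exact exists_isCyclicIntervalColoring hf (fun v ↦ hstar v ▸ (hfv (C v) v).1)
    fun v ↦ hstar v ▸ (hfv (C v) v).2

end BipartiteGraph

/-- every finite Eulerian bipartite graph with maximum degree at most `8`
has a cyclic interval `Δ(G)`-coloring. -/
theorem stmt_6 {V : Type*} [Fintype V] (G : SimpleGraph V) [DecidableRel G.Adj]
    (hbip : G.Colorable 2) (heul : ∀ v : V, Even (G.degree v)) (hΔ : G.maxDegree ≤ 8) :
    ∃ c : Sym2 V → ℕ, IsCyclicIntervalColoring G G.maxDegree c := by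
  exact stmt_6_general hbip heul (even_maxDegree heul) hΔ G.degree_le_maxDegree
end

section
/- Every finite bipartite graph G in which the degree of every vertex lies in the set {1, 2, 4, 5, 6} has a cyclic interval t-coloring for some positive integer t. -/
open SimpleGraph

/-!
Every degree is at most `2 * k` and either at most `2` or at least `2 * k - 2`, where `k = 3`. Group
the colors `1, …, 2 * k` into the pairs `{2 * i + 1, 2 * i + 2}`. It suffices to find a proper
coloring in which a vertex of degree `d` meets only `⌈d / 2⌉` of the pairs: a vertex of small degree
then sees colors of a single pair, and one of large degree misses colors of at most one pair.

Splitting every vertex into vertices of degree at most two and applying König's theorem halves the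
edge set equitably. Direct the edges of one half from one side of the bipartition to the other, and
those of the second half backwards; out- and in-degrees are now at most `⌈d / 2⌉`. Adding
`k - ⌈d / 2⌉` loops at every vertex and applying König's theorem to the bipartite graph of tails and
heads gives `k` classes with in- and out-degrees at most one, of which each vertex meets at most
`⌈d / 2⌉`. The class chooses the pair, and the direction of the edge chooses the color within it.
-/

section FiberColoring

open Finset

variable {A B C E V : Type*}

/-- `f` is injective on each fiber of `a`. When `a` sends every edge of a multigraph to one of its
ends, this says that edges with the same `a`-end receive different colors; a bipartite multigraph is
encoded by two such maps `a : E → A` and `b : E → B`, and a coloring is proper if it is injective on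
the fibers of both. -/
def InjOnFibers (a : E → A) (f : E → C) : Prop :=
  ∀ ⦃e e'⦄, a e = a e' → f e = f e' → e = e'

theorem exists_injOnFibers_lt_card_fiber [Fintype E] [DecidableEq A] (a : E → A) :
    ∃ i : E → ℕ, InjOnFibers a i ∧ ∀ e, i e < #{e' | a e' = a e} := by
  let rank (v : A) (e : {e // a e = v}) : ℕ := Fintype.equivFin {e // a e = v} e
  have rank_eq {v : A} {e : E} (he : a e = v) : rank (a e) ⟨e, rfl⟩ = rank v ⟨e, he⟩ := by
    subst he; rfl
  refine ⟨fun e ↦ rank (a e) ⟨e, rfl⟩, fun e e' hv hrank ↦ ?_, fun e ↦ ?_⟩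
  · have hrank : rank (a e') ⟨e, hv⟩ = rank (a e') ⟨e', rfl⟩ := (rank_eq hv).symm.trans hrank
    exact congrArg Subtype.val ((Fintype.equivFin _).injective (Fin.ext hrank))
  · simpa only [Fintype.card_subtype] using (Fintype.equivFin {e' // a e' = a e} ⟨e, rfl⟩).isLt

theorem exists_matching_of_card_fiber_le [Fintype E] [DecidableEq A] [DecidableEq B]
    {a : E → A} {b : E → B} {k : ℕ} (hk : 0 < k) (ha : ∀ v, k ≤ #{e | a e = v})
    (hb : ∀ w, #{e | b e = w} ≤ k) :
    ∃ M : A → E, Function.LeftInverse a M ∧ (b ∘ M).Injective := by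
  have hall (s : Finset A) : #s ≤ #(s.biUnion fun v ↦ image b {e | a e = v}) := by
    set N := s.biUnion fun v ↦ image b {e | a e = v}
    refine Nat.le_of_mul_le_mul_right ?_ hk
    calc #s * k ≤ ∑ v ∈ s, #{e | a e = v} := card_nsmul_le_sum _ _ _ fun v _ ↦ ha v
      _ = #{e | a e ∈ s} := sum_card_fiberwise_eq_card_filter ..
      _ ≤ #{e | b e ∈ N} := card_le_card fun e he ↦ by
        simp only [mem_filter_univ] at he ⊢
        exact mem_biUnion.2 ⟨a e, he, mem_image_of_mem b (by simp)⟩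
      _ = ∑ w ∈ N, #{e | b e = w} := (sum_card_fiberwise_eq_card_filter ..).symm
      _ ≤ #N * k := sum_le_card_nsmul _ _ _ fun w _ ↦ hb w
  obtain ⟨m, hm, hmem⟩ := (all_card_le_biUnion_card_iff_exists_injective _).1 hall
  have hedge (v : A) : ∃ e, a e = v ∧ b e = m v := by simpa using hmem v
  choose M haM hbM using hedge
  exact ⟨M, haM, (funext hbM : b ∘ M = m) ▸ hm⟩

theorem card_fiber_compl_range_add_one [Fintype E] [DecidableEq A] {M : B → E}
    [DecidablePred (· ∈ Set.range M)] {a : E → A} (hM : (a ∘ M).Bijective) (v : A) :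
    #{e : {e // e ∉ Set.range M} | a e = v} + 1 = #{e | a e = v} := by
  classical
  obtain ⟨w, rfl⟩ := hM.surjective v
  have himage : image Subtype.val {e : {e // e ∉ Set.range M} | a e = (a ∘ M) w} =
      ({e | a e = (a ∘ M) w} : Finset E).erase (M w) := by
    ext e
    simp only [mem_image, mem_filter_univ, Subtype.exists, mem_erase]
    constructor
    · rintro ⟨e, he, hv, rfl⟩
      exact ⟨fun h ↦ he ⟨w, h.symm⟩, hv⟩
    · rintro ⟨hne, hv⟩
      refine ⟨e, ?_, hv, rfl⟩
      rintro ⟨w', rfl⟩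
      exact hne (congrArg M (hM.injective hv))
  rw [← card_image_of_injective _ Subtype.val_injective, himage,
    card_erase_add_one (by simp)]

theorem InjOnFibers.extend_last {M : B → E} [DecidablePred (· ∈ Set.range M)] {a : E → A}
    (hM : (a ∘ M).Injective) {k : ℕ} {f : {e // e ∉ Set.range M} → Fin k}
    (hf : InjOnFibers (fun e : {e // e ∉ Set.range M} ↦ a e) f) :
    InjOnFibers a fun e ↦
      if he : e ∈ Set.range M then Fin.last k else (f ⟨e, he⟩).castSucc := by
  intro e e' hv hcolor
  by_cases he : e ∈ Set.range M <;> by_cases he' : e' ∈ Set.range M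
  · obtain ⟨⟨w, rfl⟩, w', rfl⟩ := he, he'
    exact congrArg M (hM hv)
  · simp [he, he', (Fin.castSucc_ne_last _).symm] at hcolor
  · simp [he, he', Fin.castSucc_ne_last] at hcolor
  · simp only [he, he', dite_false, Fin.castSucc_inj] at hcolor
    exact congrArg Subtype.val (hf hv hcolor)

theorem exists_edgeColoring_of_regular [DecidableEq A] [DecidableEq B] {k : ℕ} {E : Type*}
    [Fintype E] {a : E → A} {b : E → B}
    (ha : ∀ v, #{e | a e = v} = k) (hb : ∀ w, #{e | b e = w} = k) :
    ∃ f : E → Fin k, InjOnFibers a f ∧ InjOnFibers b f := by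
  classical
  induction k generalizing E with
  | zero =>
    have : IsEmpty E := ⟨fun e ↦ filter_eq_empty_iff.1 (card_eq_zero.1 (ha (a e))) (mem_univ e) rfl⟩
    exact ⟨isEmptyElim, isEmptyElim, isEmptyElim⟩
  | succ k ih =>
    obtain ⟨M, haM, hbM⟩ := exists_matching_of_card_fiber_le k.succ_pos
      (fun v ↦ (ha v).ge) fun w ↦ (hb w).le
    have haM_bij : (a ∘ M).Bijective := haM.comp_eq_id ▸ Function.bijective_id
    obtain ⟨N, hbN, haN⟩ := exists_matching_of_card_fiber_le k.succ_pos
      (fun w ↦ (hb w).ge) fun v ↦ (ha v).le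
    have : Finite A := .of_injective M haM.injective
    have : Finite B := .of_injective N hbN.injective
    have hbM_bij : (b ∘ M).Bijective :=
      hbM.bijective_of_nat_card_le (Nat.card_le_card_of_injective _ haN)
    obtain ⟨f, hfa, hfb⟩ := ih
      (fun v ↦ Nat.succ_injective ((card_fiber_compl_range_add_one haM_bij v).trans (ha v)))
      (fun w ↦ Nat.succ_injective ((card_fiber_compl_range_add_one hbM_bij w).trans (hb w)))
    exact ⟨_, hfa.extend_last haM_bij.injective, hfb.extend_last hbM⟩

theorem exists_edgeColoring_of_perm [Finite V] {k : ℕ} (τ : Equiv.Perm (V × Fin k)) :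
    ∃ f : V × Fin k → Fin k, InjOnFibers Prod.fst f ∧ InjOnFibers (fun p ↦ (τ p).1) f := by
  classical
  have := Fintype.ofFinite V
  have hfst (v : V) : #{p : V × Fin k | p.1 = v} = k := by
    have : ({p | p.1 = v} : Finset (V × Fin k)) = {v} ×ˢ univ := by
      ext p; simp [Prod.ext_iff, eq_comm]
    rw [this, card_product, card_singleton, card_fin, one_mul]
  exact exists_edgeColoring_of_regular hfst fun v ↦ (card_equiv τ (by simp)).trans (hfst v)

/-- König's edge-coloring theorem for bipartite multigraphs: the numberings `i` and `j` of the edges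
at each vertex express that all degrees are at most `k`. -/
theorem InjOnFibers.exists_edgeColoring [Finite E] {k : ℕ} {a : E → A} {b : E → B}
    {i j : E → Fin k} (hi : InjOnFibers a i) (hj : InjOnFibers b j) :
    ∃ f : E → Fin k, InjOnFibers a f ∧ InjOnFibers b f := by
  let ι : E ⊕ E ↪ (Set.range a ⊕ Set.range b) × Fin k :=
    { toFun := Sum.elim (fun e ↦ (.inl ⟨a e, e, rfl⟩, i e)) fun e ↦ (.inr ⟨b e, e, rfl⟩, j e)
      inj' := by
        rintro (e | e) (e' | e') h <;>
          simp only [Sum.elim_inl, Sum.elim_inr, Prod.mk.injEq, Sum.inl.injEq, Sum.inr.injEq,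
            reduceCtorEq, false_and] at h
        · exact congrArg _ (hi (congrArg Subtype.val h.1) h.2)
        · exact congrArg _ (hj (congrArg Subtype.val h.1) h.2) }
  -- Swapping the two copies of every edge and fixing all else makes the multigraph `k`-regular.
  let τ := Equiv.Perm.viaEmbedding (Equiv.sumComm E E) ι
  have hτ (e : E) : τ (ι (.inl e)) = ι (.inr e) := Equiv.Perm.viaEmbedding_apply ..
  obtain ⟨f, hf, hfτ⟩ := exists_edgeColoring_of_perm τ
  refine ⟨fun e ↦ f (ι (.inl e)), fun e e' hv hcolor ↦ ?_, fun e e' hw hcolor ↦ ?_⟩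
  · have hend : (ι (.inl e)).1 = (ι (.inl e')).1 := congrArg Sum.inl (Subtype.ext hv)
    exact Sum.inl_injective (ι.injective (hf hend hcolor))
  · have hend : (ι (.inr e)).1 = (ι (.inr e')).1 := congrArg Sum.inr (Subtype.ext hw)
    rw [← hτ, ← hτ] at hend
    exact Sum.inl_injective (ι.injective (hfτ hend hcolor))

theorem InjOnFibers.card_filter_le_of_lt [Fintype E] [DecidableEq A] [DecidableEq C] {a : E → A}
    {i : E → ℕ} {f : E → C} (hf : InjOnFibers (fun e ↦ (a e, i e)) f) {v : A} {m : ℕ}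
    (hi : ∀ e, a e = v → i e < m) (c : C) : #{e | a e = v ∧ f e = c} ≤ m := by
  rw [← card_range m]
  refine card_le_card_of_injOn i (fun e he ↦ ?_) fun e he e' he' hii ↦ ?_
  · simp only [coe_filter_univ, Set.mem_ofPred_eq] at he
    simpa using hi e he.1
  · simp only [coe_filter_univ, Set.mem_ofPred_eq] at he he'
    exact hf (Prod.ext (he.1.trans he'.1.symm) hii) (he.2.trans he'.2.symm)

theorem exists_injOnFibers_prod_lt_ceilDiv [Fintype E] [DecidableEq A] (a : E → A) {k : ℕ}
    (hk : 0 < k) :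
    ∃ (i : E → ℕ) (r : E → Fin k), InjOnFibers (fun e ↦ (a e, i e)) r ∧
      ∀ e, i e < #{e' | a e' = a e} ⌈/⌉ k := by
  obtain ⟨l, hl, hl_lt⟩ := exists_injOnFibers_lt_card_fiber a
  refine ⟨fun e ↦ l e / k, fun e ↦ ⟨l e % k, Nat.mod_lt _ hk⟩, fun e e' hv hr ↦ ?_, fun e ↦ ?_⟩
  · rw [Prod.mk.injEq] at hv
    exact hl hv.1 (Nat.ext_div_mod hv.2 (Fin.mk.inj hr))
  · exact (Nat.div_lt_iff_lt_mul hk).2 <| (hl_lt e).trans_le <|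
      (le_smul_ceilDiv hk).trans_eq (mul_comm ..)

/-- Cut the edges at each vertex into groups of `k`, and properly `k`-color the multigraph in which
every group has become a vertex of its own. -/
theorem exists_equitable_edgeColoring [Fintype E] [DecidableEq A] [DecidableEq B] (a : E → A)
    (b : E → B) {k : ℕ} (hk : 0 < k) :
    ∃ s : E → Fin k,
      (∀ v c, #{e | a e = v ∧ s e = c} ≤ #{e | a e = v} ⌈/⌉ k) ∧
      ∀ w c, #{e | b e = w ∧ s e = c} ≤ #{e | b e = w} ⌈/⌉ k := by
  obtain ⟨i, r, hr, hi_lt⟩ := exists_injOnFibers_prod_lt_ceilDiv a hk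
  obtain ⟨j, r', hr', hj_lt⟩ := exists_injOnFibers_prod_lt_ceilDiv b hk
  obtain ⟨s, hsa, hsb⟩ := hr.exists_edgeColoring hr'
  exact ⟨s, fun v ↦ hsa.card_filter_le_of_lt fun e he ↦ he ▸ hi_lt e,
    fun w ↦ hsb.card_filter_le_of_lt fun e he ↦ he ▸ hj_lt e⟩

/-- Petersen's argument: adding `k - m v` loops at each vertex `v` of the directed multigraph with
tails `a` and heads `b` reserves as many colors which then cannot appear on the edges at `v`. -/
theorem exists_edgeColoring_card_image_le [Fintype E] [Finite V] [DecidableEq V] {a b : E → V}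
    {k : ℕ} {m : V → ℕ} (hm : ∀ v, m v ≤ k) (ha : ∀ v, #{e | a e = v} ≤ m v)
    (hb : ∀ v, #{e | b e = v} ≤ m v) :
    ∃ f : E → Fin k, InjOnFibers a f ∧ InjOnFibers b f ∧
      ∀ v, #(image f {e | a e = v ∨ b e = v}) ≤ m v := by
  let Loop := Σ v, Fin (k - m v)
  have exists_index {d : E → V} (hd : ∀ v, #{e | d e = v} ≤ m v) :
      ∃ i : E ⊕ Loop → Fin k, InjOnFibers (Sum.elim d Sigma.fst) i := by
    obtain ⟨i, hi, hi_lt⟩ := exists_injOnFibers_lt_card_fiber d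
    replace hi_lt (e : E) : i e < m (d e) := (hi_lt e).trans_le (hd _)
    refine ⟨Sum.elim (fun e ↦ ⟨i e, (hi_lt e).trans_le (hm _)⟩)
      fun l ↦ ⟨m l.1 + l.2, by omega⟩, ?_⟩
    rintro (e | ⟨v, l⟩) (e' | ⟨v', l'⟩) hv hcolor <;>
      simp only [Sum.elim_inl, Sum.elim_inr, Fin.mk.injEq] at hv hcolor
    · exact congrArg _ (hi hv hcolor)
    · exact absurd (hv ▸ hi_lt e) (by omega)
    · exact absurd (hv ▸ hi_lt e') (by omega)
    · subst hv
      exact congrArg _ (congrArg _ (Fin.ext (by omega)))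
  obtain ⟨i, hi⟩ := exists_index ha
  obtain ⟨j, hj⟩ := exists_index hb
  obtain ⟨f, hfa, hfb⟩ := hi.exists_edgeColoring hj
  refine ⟨f ∘ Sum.inl, fun e e' hv h ↦ Sum.inl_injective (hfa hv h),
    fun e e' hv h ↦ Sum.inl_injective (hfb hv h), fun v ↦ ?_⟩
  let reserved : Fin (k - m v) → Fin k := fun l ↦ f (.inr ⟨v, l⟩)
  have reserved_injective : reserved.Injective := fun l l' h ↦ by
    simpa using @hfa (.inr ⟨v, l⟩) (.inr ⟨v, l'⟩) rfl h
  have hdisj : Disjoint (image (f ∘ Sum.inl) {e | a e = v ∨ b e = v}) (image reserved univ) := by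
    simp only [Finset.disjoint_left, mem_image, mem_filter_univ]
    rintro _ ⟨e, he | he, rfl⟩ ⟨l, -, hl⟩
    · exact Sum.inl_ne_inr (@hfa (.inl e) (.inr ⟨v, l⟩) he hl.symm)
    · exact Sum.inl_ne_inr (@hfb (.inl e) (.inr ⟨v, l⟩) he hl.symm)
  have hcard := card_le_univ ((image (f ∘ Sum.inl) {e | a e = v ∨ b e = v}).disjUnion _ hdisj)
  rw [card_disjUnion, card_image_of_injective _ reserved_injective, card_fin,
    Fintype.card_fin] at hcard
  have := hm v
  omega

/-- The tail (`i = 0`) or head (`i = 1`) of the edge `e` joining `x e` to `y e`, when the edges with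
`s e = 0` are directed from `A` to `B` and the others from `B` to `A`. -/
def orientedEnd (x : E → A) (y : E → B) (s : E → Fin 2) (i : Fin 2) (e : E) : A ⊕ B :=
  if s e = i then .inl (x e) else .inr (y e)

theorem orientedEnd_eq_inl {x : E → A} {y : E → B} {s : E → Fin 2} {i : Fin 2} {e : E} {v : A} :
    orientedEnd x y s i e = .inl v ↔ x e = v ∧ s e = i := by
  by_cases hs : s e = i <;> simp [orientedEnd, hs]

theorem orientedEnd_eq_inr {x : E → A} {y : E → B} {s : E → Fin 2} {i : Fin 2} {e : E} {w : B} :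
    orientedEnd x y s i e = .inr w ↔ y e = w ∧ s e = 1 - i := by
  have hne : s e = 1 - i ↔ s e ≠ i := by omega
  rw [hne]
  by_cases hs : s e = i <;> simp [orientedEnd, hs]

theorem orientedEnd_zero_or_one_eq_inl {x : E → A} {y : E → B} {s : E → Fin 2} {e : E} {v : A} :
    orientedEnd x y s 0 e = .inl v ∨ orientedEnd x y s 1 e = .inl v ↔ x e = v := by
  rw [orientedEnd_eq_inl, orientedEnd_eq_inl, ← and_or_left, and_iff_left]
  omega

theorem orientedEnd_zero_or_one_eq_inr {x : E → A} {y : E → B} {s : E → Fin 2} {e : E} {w : B} :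
    orientedEnd x y s 0 e = .inr w ∨ orientedEnd x y s 1 e = .inr w ↔ y e = w := by
  rw [orientedEnd_eq_inr, orientedEnd_eq_inr, ← and_or_left, and_iff_left]
  omega

/-- The two colors of a pair are told apart by `s`: in a color class of `f` every vertex has at most
one outgoing and one incoming edge. -/
theorem exists_pairedColoring [Fintype E] [Finite A] [Finite B] [DecidableEq A] [DecidableEq B]
    {x : E → A} {y : E → B} {k : ℕ} (hx : ∀ v, #{e | x e = v} ≤ 2 * k)
    (hy : ∀ w, #{e | y e = w} ≤ 2 * k) :
    ∃ c : E → Fin k × Fin 2, InjOnFibers x c ∧ InjOnFibers y c ∧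
      (∀ v, #(image (fun e ↦ (c e).1) {e | x e = v}) ≤ #{e | x e = v} ⌈/⌉ 2) ∧
      ∀ w, #(image (fun e ↦ (c e).1) {e | y e = w}) ≤ #{e | y e = w} ⌈/⌉ 2 := by
  obtain ⟨s, hsx, hsy⟩ := exists_equitable_edgeColoring x y two_pos
  let m : A ⊕ B → ℕ :=
    Sum.elim (fun v ↦ #{e | x e = v} ⌈/⌉ 2) fun w ↦ #{e | y e = w} ⌈/⌉ 2
  have hm : ∀ v, m v ≤ k :=
    Sum.rec (fun v ↦ (ceilDiv_le_iff_le_mul two_pos).2 (hx v))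
      fun w ↦ (ceilDiv_le_iff_le_mul two_pos).2 (hy w)
  have hdeg (i : Fin 2) : ∀ v, #{e | orientedEnd x y s i e = v} ≤ m v := by
    rintro (v | w)
    · simpa only [orientedEnd_eq_inl, m, Sum.elim_inl] using hsx v i
    · simpa only [orientedEnd_eq_inr, m, Sum.elim_inr] using hsy w (1 - i)
  obtain ⟨f, hf₀, hf₁, hf⟩ := exists_edgeColoring_card_image_le hm (hdeg 0) (hdeg 1)
  have hfi : ∀ i, InjOnFibers (orientedEnd x y s i) f := Fin.forall_fin_two.2 ⟨hf₀, hf₁⟩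
  refine ⟨fun e ↦ (f e, s e), fun e e' hv hc ↦ ?_, fun e e' hw hc ↦ ?_, fun v ↦ ?_, fun w ↦ ?_⟩
  · rw [Prod.mk.injEq] at hc
    refine hfi (s e) ?_ hc.1
    rw [orientedEnd_eq_inl.2 ⟨hv, rfl⟩, orientedEnd_eq_inl.2 ⟨rfl, hc.2.symm⟩]
  · rw [Prod.mk.injEq] at hc
    refine hfi (1 - s e) ?_ hc.1
    rw [orientedEnd_eq_inr.2 ⟨hw, (sub_sub_cancel ..).symm⟩,
      orientedEnd_eq_inr.2 ⟨rfl, by rw [sub_sub_cancel, hc.2]⟩]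
  · simpa only [orientedEnd_zero_or_one_eq_inl, m, Sum.elim_inl] using hf (.inl v)
  · simpa only [orientedEnd_zero_or_one_eq_inr, m, Sum.elim_inr] using hf (.inr w)

end FiberColoring

theorem isIntervalSet_of_subset_pair {S : Set ℕ} {n : ℕ} (h : S ⊆ {n, n + 1}) :
    IsIntervalSet S := by
  obtain rfl | rfl | rfl | rfl := Set.subset_pair_iff_eq.1 h
  · exact ⟨1, 0, by simp⟩
  · exact ⟨n, n, by simp⟩
  · exact ⟨n + 1, n + 1, by simp⟩
  · exact ⟨n, n + 1, by ext; simp; omega⟩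

section PairedColoring

open Finset

variable {k : ℕ}

/-- Numbers the colors `Fin k × Fin 2` by `1, …, 2 * k`, so that the pair with first coordinate `i`
becomes `{2 * i + 1, 2 * i + 2}`. -/
def pairedColor (p : Fin k × Fin 2) : ℕ := 2 * p.1 + p.2 + 1

theorem pairedColor_injective : (pairedColor : Fin k × Fin 2 → ℕ).Injective := by
  rintro ⟨i, j⟩ ⟨i', j'⟩ h
  simp only [pairedColor] at h
  ext <;> simp only <;> omega

theorem range_pairedColor : Set.range (pairedColor : Fin k × Fin 2 → ℕ) = Set.Icc 1 (2 * k) := by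
  ext n
  simp only [Set.mem_range, Set.mem_Icc, pairedColor]
  constructor
  · rintro ⟨⟨i, j⟩, rfl⟩
    simp only
    omega
  · rintro ⟨h1, h2⟩
    exact ⟨(⟨(n - 1) / 2, by omega⟩, ⟨(n - 1) % 2, by omega⟩), by simp only; omega⟩

theorem isIntervalSet_image_pairedColor {S : Set (Fin k × Fin 2)}
    (h : (Prod.fst '' S).Subsingleton) : IsIntervalSet (pairedColor '' S) := by
  obtain rfl | ⟨p, hp⟩ := S.eq_empty_or_nonempty
  · exact ⟨1, 0, by simp⟩
  refine isIntervalSet_of_subset_pair (n := 2 * p.1 + 1) ?_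
  rintro _ ⟨q, hq, rfl⟩
  have hpq : q.1 = p.1 := h (Set.mem_image_of_mem _ hq) (Set.mem_image_of_mem _ hp)
  simp only [pairedColor, hpq, Set.mem_insert_iff, Set.mem_singleton_iff]
  omega

theorem fst_image_compl_subsingleton {S : Finset (Fin k × Fin 2)} (hS : 2 * k ≤ #S + 2)
    (hfst : #(S.image Prod.fst) ≤ #S ⌈/⌉ 2) :
    (Prod.fst '' (S : Set (Fin k × Fin 2))ᶜ).Subsingleton := by
  have hcard : #S + #Sᶜ = 2 * k := by simp [card_add_card_compl, mul_comm]
  rw [← coe_compl, ← coe_image, ← card_le_one_iff_subsingleton]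
  obtain hle | hgt := le_or_gt #Sᶜ 1
  · exact card_image_le.trans hle
  have hlt : #(S.image Prod.fst) < #(univ : Finset (Fin k)) := by
    rw [Nat.ceilDiv_eq_add_pred_div] at hfst
    rw [card_fin]
    omega
  obtain ⟨i, -, hi⟩ := exists_mem_notMem_of_card_lt_card hlt
  have hpair : {i} ×ˢ univ ⊆ Sᶜ := by
    rintro ⟨i', j⟩ hj
    rw [mem_product, mem_singleton] at hj
    rw [mem_compl]
    exact fun h ↦ hi (mem_image.2 ⟨_, h, hj.1⟩)
  rw [← eq_of_subset_of_card_le hpair (by simp; omega)]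
  rw [product_image_fst univ_nonempty, card_singleton]

theorem isIntervalSet_image_or_compl {S : Finset (Fin k × Fin 2)}
    (hS : #S ≤ 2 ∨ 2 * k ≤ #S + 2) (hfst : #(S.image Prod.fst) ≤ #S ⌈/⌉ 2) :
    IsIntervalSet (pairedColor '' (S : Set (Fin k × Fin 2))) ∨
      IsIntervalSet (Set.Icc 1 (2 * k) \ pairedColor '' (S : Set (Fin k × Fin 2))) := by
  refine hS.imp (fun hle ↦ isIntervalSet_image_pairedColor ?_) fun hge ↦ ?_
  · rw [← coe_image, ← card_le_one_iff_subsingleton]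
    exact hfst.trans ((ceilDiv_le_iff_le_mul two_pos).2 hle)
  · rw [← range_pairedColor, ← Set.image_compl_eq_range_sdiff_image pairedColor_injective]
    exact isIntervalSet_image_pairedColor (fst_image_compl_subsingleton hge hfst)

end PairedColoring

section SimpleGraphColoring

open Finset

theorem exists_endpoints_of_isBipartite {V : Type*} {G : SimpleGraph V} (hG : G.IsBipartite) :
    ∃ x y : G.edgeSet → V, (∀ e : G.edgeSet, (e : Sym2 V) = s(x e, y e)) ∧ ∀ e e', x e ≠ y e' := by
  obtain ⟨X, Y, hXY⟩ := hG.exists_isBipartiteWith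
  have hends (e : G.edgeSet) : ∃ x ∈ X, ∃ y ∈ Y, (e : Sym2 V) = s(x, y) := by
    obtain ⟨⟨v, w⟩, he⟩ := e
    obtain ⟨hv, hw⟩ | ⟨hv, hw⟩ := hXY.mem_of_adj he
    · exact ⟨v, hv, w, hw, rfl⟩
    · exact ⟨w, hw, v, hv, Sym2.eq_swap⟩
  choose x hx y hy hxy using hends
  exact ⟨x, y, hxy, fun e e' ↦ hXY.disjoint.ne_of_mem (hx e) (hy e')⟩

theorem card_edges_mem_eq_degree {V : Type*} [Fintype V] [DecidableEq V] (G : SimpleGraph V)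
    [DecidableRel G.Adj] (v : V) : #{e : G.edgeSet | v ∈ (e : Sym2 V)} = G.degree v := by
  rw [← G.card_incidenceFinset_eq_degree, ← card_map (Function.Embedding.subtype _)]
  congr 1
  ext e
  simp [incidenceSet, and_comm]

theorem exists_pairedColoring_of_isBipartite {V : Type*} [Fintype V] [DecidableEq V]
    {G : SimpleGraph V} [DecidableRel G.Adj] (hG : G.IsBipartite) {k : ℕ}
    (hdeg : ∀ v, G.degree v ≤ 2 * k) :
    ∃ c : G.edgeSet → Fin k × Fin 2, ∀ v,
      Set.InjOn c {e | v ∈ (e : Sym2 V)} ∧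
      #(image (fun e ↦ (c e).1) {e : G.edgeSet | v ∈ (e : Sym2 V)}) ≤ G.degree v ⌈/⌉ 2 := by
  obtain ⟨x, y, hxy, hne⟩ := exists_endpoints_of_isBipartite hG
  have hmem (e : G.edgeSet) (v : V) : v ∈ (e : Sym2 V) ↔ x e = v ∨ y e = v := by
    rw [hxy, Sym2.mem_iff, eq_comm, @eq_comm _ v]
  have hx (v : V) : #{e | x e = v} ≤ G.degree v := by
    rw [← card_edges_mem_eq_degree]
    exact card_le_card fun e ↦ by simpa [hmem] using Or.inl
  have hy (v : V) : #{e | y e = v} ≤ G.degree v := by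
    rw [← card_edges_mem_eq_degree]
    exact card_le_card fun e ↦ by simpa [hmem] using Or.inr
  obtain ⟨c, hcx, hcy, hfstx, hfsty⟩ :=
    exists_pairedColoring (fun v ↦ (hx v).trans (hdeg v)) fun v ↦ (hy v).trans (hdeg v)
  refine ⟨c, fun v ↦ ?_⟩
  rw [← card_edges_mem_eq_degree]
  have hside : (∀ e : G.edgeSet, v ∈ (e : Sym2 V) ↔ x e = v) ∨
      ∀ e : G.edgeSet, v ∈ (e : Sym2 V) ↔ y e = v := by
    by_cases hv : ∃ e, x e = v
    · obtain ⟨e, rfl⟩ := hv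
      exact .inl fun e' ↦ by simp [hmem, (hne e e').symm]
    · exact .inr fun e ↦ by simp [hmem, not_exists.1 hv e]
  obtain hside | hside := hside <;> simp only [hside]
  · exact ⟨fun e he e' he' ↦ hcx (he.trans he'.symm), hfstx v⟩
  · exact ⟨fun e he e' he' ↦ hcy (he.trans he'.symm), hfsty v⟩

theorem isCyclicIntervalColoring_extend_pairedColor {V : Type*} [Fintype V] [DecidableEq V]
    {G : SimpleGraph V} [DecidableRel G.Adj] {k : ℕ} {c : G.edgeSet → Fin k × Fin 2}
    (hinj : ∀ v, Set.InjOn c {e | v ∈ (e : Sym2 V)})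
    (hfst : ∀ v, #(image (fun e ↦ (c e).1) {e : G.edgeSet | v ∈ (e : Sym2 V)}) ≤
      G.degree v ⌈/⌉ 2)
    (hdeg : ∀ v, G.degree v ≤ 2 ∨ 2 * k ≤ G.degree v + 2) :
    IsCyclicIntervalColoring G (2 * k) (Function.extend Subtype.val (pairedColor ∘ c) 0) := by
  have hcolor (e : G.edgeSet) : Function.extend Subtype.val (pairedColor ∘ c) 0 (e : Sym2 V) =
      pairedColor (c e) := Subtype.val_injective.extend_apply ..
  refine ⟨⟨fun e he ↦ ?_, fun e he e' he' hne ⟨v, hv, hv'⟩ heq ↦ hne ?_⟩, fun v ↦ ?_⟩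
  · rw [hcolor ⟨e, he⟩, ← range_pairedColor]
    exact Set.mem_range_self _
  · rw [hcolor ⟨e, he⟩, hcolor ⟨e', he'⟩] at heq
    exact congrArg Subtype.val (hinj v hv hv' (pairedColor_injective heq))
  let S : Finset (Fin k × Fin 2) := image c {e : G.edgeSet | v ∈ (e : Sym2 V)}
  have hS : #S = G.degree v := by
    rw [card_image_of_injOn (by simpa using hinj v), card_edges_mem_eq_degree]
  have hcolorsAt : colorsAt G (Function.extend Subtype.val (pairedColor ∘ c) 0) v =
      pairedColor '' (S : Set (Fin k × Fin 2)) := by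
    have hincidence : G.incidenceSet v = Subtype.val '' {e : G.edgeSet | v ∈ (e : Sym2 V)} :=
      Set.ext fun e ↦ by simp [incidenceSet, and_comm]
    rw [colorsAt, hincidence, ← Set.image_comp, coe_image, coe_filter_univ, ← Set.image_comp]
    exact Set.image_congr fun e _ ↦ hcolor e
  rw [hcolorsAt]
  refine isIntervalSet_image_or_compl (hS ▸ hdeg v) ?_
  rw [hS, image_image]
  exact hfst v

end SimpleGraphColoring

theorem stmt_8_general {V : Type*} [Fintype V] (G : SimpleGraph V) [DecidableRel G.Adj]
    (hbip : G.Colorable 2) {k : ℕ} (hk : 0 < k)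
    (hdeg : ∀ v, G.degree v ≤ 2 ∨ G.degree v ∈ Set.Icc (2 * k - 2) (2 * k)) :
    ∃ c : Sym2 V → ℕ, IsCyclicIntervalColoring G (2 * k) c := by
  classical
  obtain ⟨c, hc⟩ := exists_pairedColoring_of_isBipartite hbip (k := k)
    fun v ↦ (hdeg v).elim (by omega) And.right
  exact ⟨_, isCyclicIntervalColoring_extend_pairedColor (fun v ↦ (hc v).1) (fun v ↦ (hc v).2)
    fun v ↦ (hdeg v).imp_right fun h ↦ Nat.sub_le_iff_le_add.1 h.1⟩

/-- every finite bipartite graph in which all vertex degrees lie in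
`{1, 2, 4, 5, 6}` has a cyclic interval `t`-coloring for some positive `t`. -/
theorem stmt_8 {V : Type*} [Fintype V] (G : SimpleGraph V) [DecidableRel G.Adj]
    (hbip : G.Colorable 2)
    (hdeg : ∀ v : V, G.degree v ∈ ({1, 2, 4, 5, 6} : Set ℕ)) :
    ∃ t : ℕ, 0 < t ∧ ∃ c : Sym2 V → ℕ, IsCyclicIntervalColoring G t c := by
  refine ⟨2 * 3, by norm_num, stmt_8_general G hbip three_pos fun v ↦ ?_⟩
  have := hdeg v
  simp only [Set.mem_insert_iff, Set.mem_singleton_iff, Set.mem_Icc] at this ⊢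
  omega
end

section
/- Let a and b be positive integers with a < b and gcd(a, b−1) = 1. If every finite (a,b)-biregular graph has a cyclic interval b-coloring, then every finite (a, b−1)-biregular graph has a cyclic interval b-coloring. -/
open SimpleGraph

/-- An `(a,b)`-biregular graph: the vertex set is partitioned into two nonempty
independent parts `X` and `Xᶜ`, every edge joins the parts, every vertex of `X`
has degree `a`, and every vertex of `Xᶜ` has degree `b`. -/
def IsBiregular {V : Type*} [Fintype V] (G : SimpleGraph V) [DecidableRel G.Adj]
    (a b : ℕ) : Prop :=
  ∃ X : Set V, X.Nonempty ∧ Xᶜ.Nonempty ∧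
    (∀ u v : V, G.Adj u v → (u ∈ X ↔ v ∉ X)) ∧
    (∀ v ∈ X, G.degree v = a) ∧ (∀ v ∈ Xᶜ, G.degree v = b)

/-!
Let `G` be `(a, d)`-biregular with parts `X` and `Xᶜ`. Take `a` disjoint copies of `G` and, for each
`y ∈ Xᶜ`, a new vertex joined to the `a` copies of `y`. The result is `(a, d + 1)`-biregular, so it
has a cyclic interval `(d + 1)`-coloring, which we restrict to a single copy of `G`. A vertex of `X`
keeps all its edges and hence its colors, and a vertex of `Xᶜ` sees `d` of the `d + 1` colors, so
exactly one color is missing there.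
-/

variable {V W ι : Type*} {G : SimpleGraph V} {H : SimpleGraph W} {t : ℕ} {v : V}

theorem colorsAt_eq_image_neighborSet (G : SimpleGraph V) (c : Sym2 V → ℕ) (v : V) :
    colorsAt G c v = (fun u => c s(v, u)) '' G.neighborSet v := by
  ext n
  constructor
  · rintro ⟨e, ⟨he, hve⟩, rfl⟩
    obtain ⟨u, rfl⟩ := Sym2.mem_iff_exists.1 hve
    exact ⟨u, he, rfl⟩
  · rintro ⟨u, hu, rfl⟩
    exact ⟨s(v, u), ⟨hu, Sym2.mem_mk_left v u⟩, rfl⟩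

theorem colorsAt_comp_map {f : V → W} (c : Sym2 W → ℕ)
    (hf : H.neighborSet (f v) = f '' G.neighborSet v) :
    colorsAt G (c ∘ Sym2.map f) v = colorsAt H c (f v) := by
  simp only [colorsAt_eq_image_neighborSet, hf, Set.image_image, Function.comp_apply, Sym2.map_mk]

theorem IsProperEdgeColoring.comp_copy {c : Sym2 W → ℕ} (hc : IsProperEdgeColoring H t c)
    (f : Copy G H) : IsProperEdgeColoring G t (c ∘ Sym2.map f) := by
  have map_mem : ∀ e ∈ G.edgeSet, Sym2.map f e ∈ H.edgeSet := fun e he => f.toHom.map_mem_edgeSet he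
  refine ⟨fun e he => hc.1 _ (map_mem e he), ?_⟩
  rintro e₁ he₁ e₂ he₂ hne ⟨v, hv₁, hv₂⟩
  exact hc.2 _ (map_mem e₁ he₁) _ (map_mem e₂ he₂) ((Sym2.map.injective f.injective).ne hne)
    ⟨f v, Sym2.mem_map.2 ⟨v, hv₁, rfl⟩, Sym2.mem_map.2 ⟨v, hv₂, rfl⟩⟩

section ProperColoring

variable {c : Sym2 V → ℕ}

theorem IsProperEdgeColoring.colorsAt_subset (hc : IsProperEdgeColoring G t c) (v : V) :
    colorsAt G c v ⊆ Set.Icc 1 t :=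
  Set.image_subset_iff.2 fun e he => hc.1 e he.1

theorem IsProperEdgeColoring.ncard_colorsAt (hc : IsProperEdgeColoring G t c)
    [Fintype (G.neighborSet v)] : (colorsAt G c v).ncard = G.degree v := by
  classical
  have injOn : Set.InjOn c (G.incidenceSet v) := fun e₁ he₁ e₂ he₂ heq => by
    by_contra hne
    exact hc.2 e₁ he₁.1 e₂ he₂.1 hne ⟨v, he₁.2, he₂.2⟩ heq
  rw [colorsAt, injOn.ncard_image, ← card_incidenceSet_eq_degree, ← Nat.card_eq_fintype_card,
    Nat.card_coe_set_eq]

theorem IsProperEdgeColoring.isIntervalSet_Icc_sdiff_colorsAt (hc : IsProperEdgeColoring G t c)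
    [Fintype (G.neighborSet v)] (hdeg : G.degree v + 1 = t) :
    IsIntervalSet (Set.Icc 1 t \ colorsAt G c v) := by
  have ncard_missing : (Set.Icc 1 t \ colorsAt G c v).ncard = 1 := by
    rw [Set.ncard_sdiff (hc.colorsAt_subset v) ((Set.finite_Icc 1 t).subset (hc.colorsAt_subset v)),
      hc.ncard_colorsAt, ← Finset.coe_Icc, Set.ncard_coe_finset, Nat.card_Icc]
    lia
  obtain ⟨m, hm⟩ := Set.ncard_eq_one.1 ncard_missing
  exact ⟨m, m, by rw [hm, Set.Icc_self]⟩

end ProperColoring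

/-- The disjoint union of copies of `G` indexed by `ι`, together with one new vertex (a hub) for
each `s ∈ S`, joined to all the copies of `s`. The vertex `Sum.inl (v, i)` is `v` in the copy with
index `i`, and `Sum.inr s` is the hub of `s`. -/
def hubGraph (G : SimpleGraph V) (S : Set V) (ι : Type*) : SimpleGraph (V × ι ⊕ S) where
  Adj
    | .inl (u, i), .inl (v, j) => G.Adj u v ∧ i = j
    | .inl (u, _), .inr s => u = s
    | .inr s, .inl (u, _) => u = s
    | .inr _, .inr _ => False
  symm := ⟨by
    rintro (⟨u, i⟩ | s) (⟨v, j⟩ | s') h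
    · exact ⟨h.1.symm, h.2.symm⟩
    · exact h
    · exact h
    · exact h⟩
  loopless := ⟨by
    rintro (⟨u, i⟩ | s) h
    · exact G.irrefl h.1
    · exact h⟩

namespace hubGraph

variable {S : Set V}

@[simp]
theorem adj_inl_inl {p q : V × ι} :
    (hubGraph G S ι).Adj (.inl p) (.inl q) ↔ G.Adj p.1 q.1 ∧ p.2 = q.2 := Iff.rfl

@[simp]
theorem adj_inl_inr {p : V × ι} {s : S} :
    (hubGraph G S ι).Adj (.inl p) (.inr s) ↔ p.1 = s := Iff.rfl

@[simp]
theorem adj_inr_inl {p : V × ι} {s : S} :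
    (hubGraph G S ι).Adj (.inr s) (.inl p) ↔ p.1 = s := Iff.rfl

@[simp]
theorem not_adj_inr_inr {s s' : S} : ¬(hubGraph G S ι).Adj (.inr s) (.inr s') := id

/-- The copy of `G` with index `i` inside `hubGraph G S ι`. -/
def copy (G : SimpleGraph V) (S : Set V) (i : ι) : Copy G (hubGraph G S ι) where
  toHom := ⟨fun v => .inl (v, i), fun h => ⟨h, rfl⟩⟩
  injective' _ _ h := (Prod.ext_iff.1 (Sum.inl_injective h)).1

@[simp]
theorem copy_apply (i : ι) : copy G S i v = .inl (v, i) := rfl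

theorem neighborSet_copy_of_notMem (hv : v ∉ S) (i : ι) :
    (hubGraph G S ι).neighborSet (copy G S i v) = copy G S i '' G.neighborSet v := by
  ext (⟨u, j⟩ | s)
  · simp [eq_comm]
  · simpa using fun h : v = s => hv (h ▸ s.2)

theorem neighborSet_copy_of_mem (hv : v ∈ S) (i : ι) :
    (hubGraph G S ι).neighborSet (copy G S i v) =
      insert (.inr ⟨v, hv⟩) (copy G S i '' G.neighborSet v) := by
  ext (⟨u, j⟩ | s)
  · simp [eq_comm]
  · simp [Subtype.ext_iff, eq_comm]

theorem neighborSet_hub (s : S) :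
    (hubGraph G S ι).neighborSet (.inr s) = Set.range fun i => copy G S i s := by
  ext (⟨u, j⟩ | s')
  · simp [eq_comm]
  · simp

theorem degree_copy_of_notMem [Fintype (G.neighborSet v)] {i : ι}
    [Fintype ((hubGraph G S ι).neighborSet (copy G S i v))] (hv : v ∉ S) :
    (hubGraph G S ι).degree (copy G S i v) = G.degree v := by
  simp only [← card_neighborSet_eq_degree, Set.fintypeCard_eq_ncard,
    neighborSet_copy_of_notMem hv,
    Set.ncard_image_of_injective (f := copy G S i) _ (copy G S i).injective]

theorem degree_copy_of_mem [Fintype (G.neighborSet v)] {i : ι}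
    [Fintype ((hubGraph G S ι).neighborSet (copy G S i v))] (hv : v ∈ S) :
    (hubGraph G S ι).degree (copy G S i v) = G.degree v + 1 := by
  have hub_notMem : .inr ⟨v, hv⟩ ∉ copy G S i '' G.neighborSet v := by simp
  simp only [← card_neighborSet_eq_degree, Set.fintypeCard_eq_ncard,
    neighborSet_copy_of_mem hv, Set.ncard_insert_of_notMem hub_notMem,
    Set.ncard_image_of_injective (f := copy G S i) _ (copy G S i).injective]

theorem degree_hub [Fintype ι] (s : S) [Fintype ((hubGraph G S ι).neighborSet (.inr s))] :
    (hubGraph G S ι).degree (.inr s) = Fintype.card ι := by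
  have copies_injective : Function.Injective fun i : ι => copy G S i s := fun i j h =>
    (Prod.ext_iff.1 (Sum.inl_injective h)).2
  rw [← card_neighborSet_eq_degree, Set.fintypeCard_eq_ncard, neighborSet_hub,
    Set.ncard_range_of_injective copies_injective, Nat.card_eq_fintype_card]

theorem isBiregular [Fintype V] [Fintype ι] [Nonempty ι] [DecidableRel G.Adj] {X : Set V}
    [Fintype ↥Xᶜ] [DecidableRel (hubGraph G Xᶜ ι).Adj] {d : ℕ} (hne : Xᶜ.Nonempty)
    (hX : ∀ u v : V, G.Adj u v → (u ∈ X ↔ v ∉ X))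
    (hdegX : ∀ v ∈ X, G.degree v = Fintype.card ι) (hdegXc : ∀ v ∈ Xᶜ, G.degree v = d) :
    IsBiregular (hubGraph G Xᶜ ι) (Fintype.card ι) (d + 1) := by
  obtain ⟨y, hy⟩ := hne
  refine ⟨Sum.inl '' (X ×ˢ Set.univ) ∪ Set.range Sum.inr, ⟨.inr ⟨y, hy⟩, by simp⟩,
    ⟨.inl (y, Classical.arbitrary ι), by simpa using hy⟩, ?_, ?_, ?_⟩
  · rintro (⟨u, i⟩ | s) (⟨v, j⟩ | s') hadj
    · simpa using hX u v hadj.1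
    · obtain rfl : u = s' := hadj
      simpa using (Set.mem_compl_iff X s').1 s'.2
    · obtain rfl : v = s := hadj
      simpa using (Set.mem_compl_iff X s).1 s.2
    · exact hadj.elim
  · rintro (⟨v, i⟩ | s) hp
    · have hv : v ∈ X := by simpa using hp
      exact (degree_copy_of_notMem (not_not.2 hv)).trans (hdegX v hv)
    · exact degree_hub s
  · rintro (⟨v, i⟩ | s) hp
    · have hv : v ∈ Xᶜ := by simpa using hp
      exact (degree_copy_of_mem hv).trans (congrArg (· + 1) (hdegXc v hv))
    · simp at hp

end hubGraph

universe u

theorem stmt_10_general (a d : ℕ) (ha : 0 < a)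
    (hyp : ∀ (W : Type u) [Fintype W] (H : SimpleGraph W) [DecidableRel H.Adj],
      IsBiregular H a (d + 1) → ∃ c : Sym2 W → ℕ, IsCyclicIntervalColoring H (d + 1) c)
    {V : Type u} [Fintype V] (G : SimpleGraph V) [DecidableRel G.Adj]
    (hbireg : IsBiregular G a d) :
    ∃ c : Sym2 V → ℕ, IsCyclicIntervalColoring G (d + 1) c := by
  classical
  obtain ⟨X, -, hne, hX, hdegX, hdegXc⟩ := hbireg
  have : Nonempty (Fin a) := ⟨⟨0, ha⟩⟩
  have hubGraph_biregular : IsBiregular (hubGraph G Xᶜ (Fin a)) a (d + 1) := by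
    simpa using hubGraph.isBiregular (ι := Fin a) hne hX (by simpa using hdegX) hdegXc
  obtain ⟨c, hproper, hcyclic⟩ := hyp _ _ hubGraph_biregular
  let f := hubGraph.copy G Xᶜ (⟨0, ha⟩ : Fin a)
  refine ⟨c ∘ Sym2.map f, hproper.comp_copy f, fun v => ?_⟩
  by_cases hv : v ∈ X
  · rw [colorsAt_comp_map c (hubGraph.neighborSet_copy_of_notMem (not_not.2 hv) _)]
    exact hcyclic (f v)
  · exact .inr ((hproper.comp_copy f).isIntervalSet_Icc_sdiff_colorsAt
      (congrArg (· + 1) (hdegXc v hv)))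

/-- if `a < b`, `gcd(a, b-1) = 1`, and every finite `(a,b)`-biregular graph
has a cyclic interval `b`-coloring, then every finite `(a, b-1)`-biregular graph has a
cyclic interval `b`-coloring. -/
theorem stmt_10 (a b : ℕ) (ha : 0 < a) (hab : a < b) (hgcd : Nat.gcd a (b - 1) = 1)
    (hyp : ∀ (W : Type) [Fintype W] (H : SimpleGraph W) [DecidableRel H.Adj],
      IsBiregular H a b → ∃ c : Sym2 W → ℕ, IsCyclicIntervalColoring H b c)
    {V : Type} [Fintype V] (G : SimpleGraph V) [DecidableRel G.Adj]
    (hbireg : IsBiregular G a (b - 1)) :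
    ∃ c : Sym2 V → ℕ, IsCyclicIntervalColoring G b c := by
  obtain ⟨d, rfl⟩ := Nat.exists_eq_add_of_lt hab
  exact stmt_10_general a (a + d) ha hyp G hbireg
end

section
/- Every finite (3,5)-biregular graph G has a cyclic interval t-coloring for some t ≤ 6. -/
open SimpleGraph

/-!
A bipartite multigraph is handled through its type of edges and two end maps, one for each side.
By König's theorem, if each side can be properly edge colored on its own with a set `K` of colors,
then one coloring with `K` is proper on both sides.

Split every vertex of degree at most six into two vertices of degree at most three. König's theorem
with three colors then gives classes `0, 1, 2`, each used once at a vertex of degree three and at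
most twice at every other vertex. A second application, with two colors, separates equal classes at
the latter vertices, and at the former the edge of class `0` from the edge of class `1`. Class `i`
receives the pair of colors congruent to `i + 1` modulo 3, ordered so that two distinct bits on the
classes `0` and `1` give the colors `1, 2` or `4, 5`. Each of these pairs extends by `3` as well as
by `6` to three cyclically consecutive colors, and five or six colors out of six are always
cyclically consecutive.
-/

open Finset Function

section BipartiteMultigraph

variable {E A B K : Type*}

/-- In a bipartite multigraph with edge type `E` and end map `f` to one of its sides, `c` is a
proper edge coloring as far as that side is concerned: distinct edges with the same end under `f`
have distinct colors. -/
def IsProperAlong (f : E → A) (c : E → K) : Prop :=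
  Injective fun e ↦ (f e, c e)

theorem IsProperAlong.ne {f : E → A} {c : E → K} (h : IsProperAlong f c) {e e' : E}
    (hne : e ≠ e') (hf : f e = f e') : c e ≠ c e' :=
  fun hc ↦ hne (h (Prod.ext hf hc))

/-- The set `S` of edges induces degree `k` at every vertex of the side reached by the end map
`f`. -/
def IsRegularAlong [DecidableEq A] (f : E → A) (S : Finset E) (k : ℕ) : Prop :=
  ∀ a, #{e ∈ S | f e = a} = k

section Regular

variable [DecidableEq A] [DecidableEq B] {f : E → A} {g : E → B} {S M : Finset E} {k : ℕ}

theorem IsRegularAlong.card_filter_mem (hf : IsRegularAlong f S k) (s : Finset A) :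
    #{e ∈ S | f e ∈ s} = #s * k := by
  rw [← sum_card_fiberwise_eq_card_filter, sum_const_nat fun a _ ↦ hf a]

theorem IsRegularAlong.card_eq [Fintype A] (hf : IsRegularAlong f S k) :
    #S = Fintype.card A * k := by
  simpa using hf.card_filter_mem univ

theorem IsRegularAlong.sdiff [DecidableEq E] {l : ℕ} (hS : IsRegularAlong f S k)
    (hM : IsRegularAlong f M l) (hMS : M ⊆ S) : IsRegularAlong f (S \ M) (k - l) := by
  intro a
  have hfilter : {e ∈ S \ M | f e = a} = {e ∈ S | f e = a} \ {e ∈ M | f e = a} := by grind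
  rw [hfilter, card_sdiff_of_subset (filter_subset_filter _ hMS), hS a, hM a]

theorem isRegularAlong_image_of_bijective [DecidableEq E] {ι : Type*} [Fintype ι] {h : ι → E}
    (hbij : Bijective (f ∘ h)) : IsRegularAlong f (univ.image h) 1 := by
  intro a
  obtain ⟨i, hi, hunique⟩ := hbij.existsUnique a
  refine card_eq_one.2 ⟨h i, ?_⟩
  ext e
  simp only [mem_filter, mem_image, mem_univ, true_and, mem_singleton]
  constructor
  · rintro ⟨⟨j, rfl⟩, hj⟩
    rw [hunique j hj]
  · rintro rfl
    exact ⟨⟨i, rfl⟩, hi⟩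

theorem IsRegularAlong.card_le_card_neighbors (hf : IsRegularAlong f S k)
    (hg : IsRegularAlong g S k) (hk : 0 < k) (s : Finset A) :
    #s ≤ #(s.biUnion fun a ↦ {e ∈ S | f e = a}.image g) := by
  refine Nat.le_of_mul_le_mul_right ?_ hk
  rw [← hf.card_filter_mem, ← hg.card_filter_mem]
  refine card_le_card fun e he ↦ ?_
  obtain ⟨heS, hes⟩ := mem_filter.1 he
  exact mem_filter.2 ⟨heS, mem_biUnion.2 ⟨f e, hes, mem_image_of_mem g (by simp [heS])⟩⟩

theorem IsRegularAlong.exists_perfect_matching [Finite A] [Finite B] (hf : IsRegularAlong f S k)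
    (hg : IsRegularAlong g S k) (hk : 0 < k) :
    ∃ M ⊆ S, IsRegularAlong f M 1 ∧ IsRegularAlong g M 1 := by
  classical
  cases nonempty_fintype A
  cases nonempty_fintype B
  obtain ⟨m, hm, hmem⟩ := (all_card_le_biUnion_card_iff_exists_injective _).1
    (hf.card_le_card_neighbors hg hk)
  have hcard : Fintype.card A = Fintype.card B :=
    Nat.eq_of_mul_eq_mul_right hk (hf.card_eq.symm.trans hg.card_eq)
  have hbij : Bijective m := (Fintype.bijective_iff_injective_and_card m).2 ⟨hm, hcard⟩
  have hedge (a : A) : ∃ e ∈ S, f e = a ∧ g e = m a := by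
    simpa only [mem_image, mem_filter, and_assoc] using hmem a
  choose h hS hfh hgh using hedge
  refine ⟨univ.image h, by simpa [image_subset_iff] using hS,
    isRegularAlong_image_of_bijective ?_, isRegularAlong_image_of_bijective ?_⟩
  · rw [show f ∘ h = id from funext hfh]
    exact bijective_id
  · rwa [show g ∘ h = m from funext hgh]

theorem IsRegularAlong.injOn (hM : IsRegularAlong f M 1) : Set.InjOn f M := fun e he e' he' h ↦
  card_le_one.1 (hM (f e')).le e (mem_filter.2 ⟨he, h⟩) e' (mem_filter.2 ⟨he', rfl⟩)

theorem IsRegularAlong.injOn_prod_ite [DecidableEq E] {c : E → K} {κ : K}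
    (hM : IsRegularAlong f M 1) (hc : Set.InjOn (fun e ↦ (f e, c e)) ↑(S \ M))
    (hκ : ∀ e ∈ S \ M, c e ≠ κ) :
    Set.InjOn (fun e ↦ (f e, if e ∈ M then κ else c e)) S := by
  intro e he e' he' h
  obtain ⟨hfe, hce⟩ := Prod.ext_iff.1 h
  dsimp only at hfe hce
  by_cases heM : e ∈ M <;> by_cases heM' : e' ∈ M
  · exact hM.injOn heM heM' hfe
  · rw [if_pos heM, if_neg heM'] at hce
    exact absurd hce.symm (hκ e' (mem_sdiff.2 ⟨he', heM'⟩))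
  · rw [if_neg heM, if_pos heM'] at hce
    exact absurd hce (hκ e (mem_sdiff.2 ⟨he, heM⟩))
  · rw [if_neg heM, if_neg heM'] at hce
    exact hc (mem_sdiff.2 ⟨he, heM⟩) (mem_sdiff.2 ⟨he', heM'⟩) (Prod.ext hfe hce)

theorem IsRegularAlong.exists_coloring [Finite A] [Finite B] [Nonempty K] {C : Finset K}
    (hf : IsRegularAlong f S #C) (hg : IsRegularAlong g S #C) :
    ∃ c : E → K, Set.MapsTo c S C ∧ Set.InjOn (fun e ↦ (f e, c e)) S ∧
      Set.InjOn (fun e ↦ (g e, c e)) S := by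
  classical
  induction C using Finset.induction_on generalizing S with
  | empty =>
    obtain rfl : S = ∅ := by
      refine eq_empty_of_forall_notMem fun e he ↦ ?_
      exact notMem_empty e (card_eq_zero.1 (hf (f e)) ▸ mem_filter.2 ⟨he, rfl⟩)
    exact ⟨fun _ ↦ Classical.arbitrary K, by simp [Set.MapsTo]⟩
  | insert κ C hκ ih =>
    obtain ⟨M, hMS, hfM, hgM⟩ := hf.exists_perfect_matching hg (by simp)
    rw [card_insert_of_notMem hκ] at hf hg
    obtain ⟨c, hcC, hfc, hgc⟩ := ih (hf.sdiff hfM hMS) (hg.sdiff hgM hMS)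
    have hcκ (e) (he : e ∈ S \ M) : c e ≠ κ := ne_of_mem_of_not_mem (hcC he) hκ
    refine ⟨fun e ↦ if e ∈ M then κ else c e, fun e he ↦ ?_,
      hfM.injOn_prod_ite hfc hcκ, hgM.injOn_prod_ite hgc hcκ⟩
    dsimp only
    split_ifs with heM
    · exact mem_insert_self κ C
    · exact mem_insert_of_mem (hcC (mem_sdiff.2 ⟨he, heM⟩))

end Regular

theorem isRegularAlong_fst_comp_perm [Fintype A] [Fintype K] [DecidableEq A]
    (σ : Equiv.Perm (A × K)) :
    IsRegularAlong (fun x ↦ (σ x).1) univ (Fintype.card K) := by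
  intro a
  have hfiber : ({x | (σ x).1 = a} : Finset (A × K)) =
      (({a} : Finset A) ×ˢ univ).map σ.symm.toEmbedding := by
    ext x
    simp [Finset.mem_map_equiv, Prod.ext_iff, eq_comm]
  rw [hfiber, card_map, card_product, card_singleton, one_mul, card_univ]

theorem exists_isProperAlong_fst_comp_perm [Finite A] [Finite K] [Nonempty K]
    (σ : Equiv.Perm (A × K)) :
    ∃ c : A × K → K, IsProperAlong Prod.fst c ∧ IsProperAlong (fun x ↦ (σ x).1) c := by
  classical
  cases nonempty_fintype A
  cases nonempty_fintype K
  obtain ⟨c, -, hfst, hσ⟩ :=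
    (isRegularAlong_fst_comp_perm (A := A) (K := K) 1).exists_coloring (C := univ)
      (isRegularAlong_fst_comp_perm σ)
  exact ⟨c, by simpa [IsProperAlong] using hfst, by simpa [IsProperAlong] using hσ⟩

/-- **König's edge coloring theorem** for bipartite multigraphs. The hypotheses express that both
sides have degrees at most the number of colors, see `exists_isProperAlong`. -/
theorem IsProperAlong.exists_common [Finite A] [Finite B] [Finite K] {f : E → A} {g : E → B}
    {s t : E → K} (hs : IsProperAlong f s) (ht : IsProperAlong g t) :
    ∃ c : E → K, IsProperAlong f c ∧ IsProperAlong g c := by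
  cases isEmpty_or_nonempty K
  · exact ⟨s, hs, Subsingleton.elim t s ▸ ht⟩
  have : Finite E := .of_injective _ hs
  -- The multigraph embeds into one with both sides equal to `A ⊕ B` and with edges
  -- `(A ⊕ B) × K`, which is regular; the permutation `σ` records the second end of each edge.
  obtain ⟨σ, hσ⟩ := Equiv.Perm.exists_extending_pair
    (fun e ↦ ((Sum.inl (f e) : A ⊕ B), s e)) (fun e ↦ (Sum.inr (g e), t e))
    (fun e e' h ↦ hs (by simpa using h)) (fun e e' h ↦ ht (by simpa using h))
  obtain ⟨c, hfst, hcσ⟩ := exists_isProperAlong_fst_comp_perm σ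
  refine ⟨fun e ↦ c (Sum.inl (f e), s e), fun e e' h ↦ hs ?_, fun e e' h ↦ hs ?_⟩
  · simpa using @hfst (Sum.inl (f e), s e) (Sum.inl (f e'), s e') (by simpa using h)
  · simpa using @hcσ (Sum.inl (f e), s e) (Sum.inl (f e'), s e') (by simpa [hσ] using h)

theorem exists_isProperAlong [Finite E] [Finite K] {f : E → A}
    (hf : ∀ a, Nat.card {e // f e = a} ≤ Nat.card K) : ∃ c : E → K, IsProperAlong f c := by
  have hemb (a : A) : ∃ ψ : {e // f e = a} → K, Injective ψ := by
    cases nonempty_fintype E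
    cases nonempty_fintype K
    classical
    obtain ⟨ψ⟩ := Embedding.nonempty_of_card_le (α := {e // f e = a}) (β := K)
      (by simpa using hf a)
    exact ⟨ψ, ψ.injective⟩
  choose ψ hψ using hemb
  refine ⟨fun e ↦ ψ (f e) ⟨e, rfl⟩, fun e e' h ↦ ?_⟩
  obtain ⟨hfe, hψe⟩ := Prod.ext_iff.1 h
  dsimp only at hfe hψe
  have hψ_eq (a : A) (ha : f e = a) : ψ (f e) ⟨e, rfl⟩ = ψ a ⟨e, ha⟩ := by
    subst ha
    rfl
  exact congrArg Subtype.val (hψ (f e') ((hψ_eq _ hfe).symm.trans hψe))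

theorem IsProperAlong.exists_section [Finite K] {f : E → A} {c : E → K} (hc : IsProperAlong f c)
    {a : A} (ha : Nat.card K ≤ Nat.card {e // f e = a}) :
    ∃ ε : K → E, {e | f e = a} = Set.range ε ∧ ∀ i, c (ε i) = i := by
  have hinj : Injective fun e : {e // f e = a} ↦ c e := fun e e' h ↦
    Subtype.ext (hc (Prod.ext (e.2.trans e'.2.symm) h))
  let φ := Equiv.ofBijective _ (hinj.bijective_of_nat_card_le ha)
  refine ⟨fun i ↦ φ.symm i, ?_, φ.apply_symm_apply⟩
  rw [Set.range_comp' Subtype.val φ.symm, φ.symm.range_eq_univ, Set.image_univ,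
    Subtype.range_coe_subtype]

/-- The second coloring refines the first: it separates equally colored edges on the side of `g`,
where `t` may use `K × L`, and on the side of `f` it separates those edges whose first colors are
identified by `p`. -/
theorem IsProperAlong.exists_two_step {L P : Type*} [Finite A] [Finite B] [Finite K] [Finite L]
    [Finite P] {f : E → A} {g : E → B} {s : E → K} {t : E → K × L} {p : K → P} {q : K → L}
    (hs : IsProperAlong f s) (ht : IsProperAlong g t) (hpq : IsProperAlong p q) :
    ∃ (c : E → K) (d : E → L), IsProperAlong f c ∧ IsProperAlong (fun e ↦ (f e, p (c e))) d ∧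
      IsProperAlong g fun e ↦ (c e, d e) := by
  -- Each vertex `b` is split into vertices `(b, l)`, at which `t` only uses colors `(k, l)`.
  have hsplit : IsProperAlong (fun e ↦ (g e, (t e).2)) fun e ↦ (t e).1 := fun e e' h ↦
    ht (by simp only [Prod.ext_iff] at h ⊢; tauto)
  obtain ⟨c, hfc, hgc⟩ := hs.exists_common hsplit
  have hq : IsProperAlong (fun e ↦ (f e, p (c e))) fun e ↦ q (c e) := fun e e' h ↦ by
    simp only [Prod.mk.injEq, and_assoc] at h
    exact hfc (Prod.ext h.1 (hpq (Prod.ext h.2.1 h.2.2)))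
  have ht₂ : IsProperAlong (fun e ↦ (g e, c e)) fun e ↦ (t e).2 := fun e e' h ↦
    hgc (by simp only [Prod.ext_iff] at h ⊢; tauto)
  obtain ⟨d, hfd, hgd⟩ := hq.exists_common ht₂
  exact ⟨c, d, hfc, hfd, fun e e' h ↦ hgd (by simp only [Prod.ext_iff] at h ⊢; tauto)⟩

theorem IsProperAlong.ncard_image_fiber {f : E → A} {c : E → K} (hc : IsProperAlong f c) (a : A) :
    (c '' {e | f e = a}).ncard = Nat.card {e // f e = a} :=
  Set.InjOn.ncard_image fun _ he _ he' h ↦ hc (Prod.ext (he.trans he'.symm) h)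

theorem IsProperAlong.comp {L : Type*} {f : E → A} {c : E → K} (hc : IsProperAlong f c)
    {φ : K → L} (hφ : Injective φ) : IsProperAlong f (φ ∘ c) := fun _ _ h ↦
  hc (Prod.ext (Prod.ext_iff.1 h).1 (hφ (Prod.ext_iff.1 h).2))

theorem IsProperAlong.of_fst {L : Type*} {f : E → A} {c : E → K} (hc : IsProperAlong f c)
    (d : E → L) : IsProperAlong f fun e ↦ (c e, d e) := fun _ _ h ↦
  hc (by simp only [Prod.ext_iff] at h ⊢; tauto)

theorem exists_class_bit_coloring [Finite A] [Finite B] [Finite E] {f : E → A} {g : E → B}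
    (hf : ∀ a, Nat.card {e // f e = a} ≤ 3) (hg : ∀ b, Nat.card {e // g e = b} ≤ 6) :
    ∃ (c : E → Fin 3) (d : E → Fin 2), IsProperAlong f c ∧
      IsProperAlong (fun e ↦ (f e, c e = 2)) d ∧ IsProperAlong g fun e ↦ (c e, d e) := by
  obtain ⟨s, hs⟩ : ∃ s : E → Fin 3, IsProperAlong f s := exists_isProperAlong (by simpa using hf)
  obtain ⟨t, ht⟩ : ∃ t : E → Fin 3 × Fin 2, IsProperAlong g t :=
    exists_isProperAlong (by simpa using hg)
  have hpq : IsProperAlong (· = (2 : Fin 3)) (![0, 1, 0] : Fin 3 → Fin 2) := by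
    intro i j h
    simp only [Prod.mk.injEq, eq_iff_iff] at h
    decide +revert
  exact hs.exists_two_step ht hpq

end BipartiteMultigraph

section CyclicInterval

theorem isIntervalSet_of_subsingleton {S : Set ℕ} (hS : S.Subsingleton) : IsIntervalSet S := by
  rcases hS.eq_empty_or_singleton with rfl | ⟨a, rfl⟩
  · exact ⟨1, 0, by simp⟩
  · exact ⟨a, a, by simp⟩

/-- The color of an edge in class `i` with bit `b`. The colors of a class agree modulo 3, and those
of class `1` are swapped so that distinct bits on classes `0` and `1` give consecutive colors. -/
def palette (i : Fin 3) (b : Fin 2) : ℕ :=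
  ![![1, 4], ![5, 2], ![3, 6]] i b

theorem palette_mem_Icc (i : Fin 3) (b : Fin 2) : palette i b ∈ Set.Icc 1 6 := by
  rw [← Finset.coe_Icc, Finset.mem_coe]
  decide +revert

theorem palette_injective : Injective fun x : Fin 3 × Fin 2 ↦ palette x.1 x.2 := by
  decide

theorem isIntervalSet_range_palette_or_compl {b : Fin 3 → Fin 2} (hb : b 0 ≠ b 1) :
    IsIntervalSet (Set.range fun i ↦ palette i (b i)) ∨
      IsIntervalSet (Set.Icc 1 6 \ Set.range fun i ↦ palette i (b i)) := by
  have hfinset : ∃ x ∈ Icc 1 6, ∃ y ∈ Icc 1 6, univ.image (fun i ↦ palette i (b i)) = Icc x y ∨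
      Icc 1 6 \ univ.image (fun i ↦ palette i (b i)) = Icc x y := by
    decide +revert
  obtain ⟨x, -, y, -, h⟩ := hfinset
  simp only [← Finset.coe_inj, coe_sdiff, coe_image, coe_univ, Set.image_univ, coe_Icc] at h
  exact h.imp (fun h ↦ ⟨x, y, h⟩) fun h ↦ ⟨x, y, h⟩

theorem IsProperAlong.isIntervalSet_image_palette_or_compl {E A : Type*} {f : E → A}
    {c : E → Fin 3} {d : E → Fin 2} (hc : IsProperAlong f c)
    (hd : IsProperAlong (fun e ↦ (f e, c e = 2)) d) {a : A} (ha : Nat.card {e // f e = a} = 3) :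
    IsIntervalSet ((fun e ↦ palette (c e) (d e)) '' {e | f e = a}) ∨
      IsIntervalSet (Set.Icc 1 6 \ (fun e ↦ palette (c e) (d e)) '' {e | f e = a}) := by
  obtain ⟨ε, hε, hcε⟩ := hc.exists_section (a := a) (by simp [ha])
  have hfε (i) : f (ε i) = a := (hε ▸ Set.mem_range_self i : ε i ∈ {e | f e = a})
  have hne : ε 0 ≠ ε 1 := fun h ↦ by simpa [hcε] using congrArg c h
  have hbits : d (ε 0) ≠ d (ε 1) := hd.ne hne (by simp [hfε, hcε])
  simpa only [hε, ← Set.range_comp', hcε] using isIntervalSet_range_palette_or_compl hbits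

theorem isIntervalSet_Icc_sdiff {S : Set ℕ} {t : ℕ} (hS : S ⊆ Set.Icc 1 t)
    (hcard : t ≤ S.ncard + 1) : IsIntervalSet (Set.Icc 1 t \ S) := by
  refine isIntervalSet_of_subsingleton ?_
  rw [← Set.ncard_le_one_iff_subsingleton, Set.ncard_sdiff hS ((Set.finite_Icc 1 t).subset hS),
    Set.ncard_Icc_nat]
  omega

end CyclicInterval

section BipartiteGraph

variable {V : Type*} {G : SimpleGraph V} {s t : Set V}

/-- `f` maps each edge of `G` to its unique end in `s`. -/
def IsEndMap (G : SimpleGraph V) (s : Set V) (f : G.edgeSet → s) : Prop :=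
  ∀ e v, f e = v ↔ ↑v ∈ (e : Sym2 V)

theorem exists_isEndMap (h : G.IsBipartiteWith s t) : ∃ f, IsEndMap G s f := by
  have hexists (e : G.edgeSet) : ∃ u : s, ∀ v : s, u = v ↔ ↑v ∈ (e : Sym2 V) := by
    obtain ⟨⟨u, v⟩, huv⟩ := e
    have hmem (w x : V) (hw : w ∈ s) (hx : x ∈ t) (y : s) : ⟨w, hw⟩ = y ↔ ↑y ∈ s(w, x) := by
      have hyx : ↑y ≠ x := h.disjoint.ne_of_mem y.2 hx
      simp [Subtype.ext_iff, hyx, eq_comm]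
    rcases h.mem_of_adj huv with ⟨hu, hv⟩ | ⟨hu, hv⟩
    · exact ⟨⟨u, hu⟩, hmem u v hu hv⟩
    · exact ⟨⟨v, hv⟩, fun y ↦ (hmem v u hv hu y).trans (by rw [Sym2.eq_swap])⟩
  exact ⟨fun e ↦ (hexists e).choose, fun e ↦ (hexists e).choose_spec⟩

theorem incidenceSet_eq_image_edgeSet (G : SimpleGraph V) (v : V) :
    G.incidenceSet v = Subtype.val '' {e : G.edgeSet | v ∈ (e : Sym2 V)} := by
  ext e
  simp [incidenceSet, and_comm]

theorem IsEndMap.card_fiber {f : G.edgeSet → s} (hf : IsEndMap G s f) (v : s)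
    [Fintype (G.neighborSet v)] : Nat.card {e // f e = v} = G.degree v := by
  classical
  rw [← card_incidenceSet_eq_degree, ← Nat.card_eq_fintype_card, incidenceSet_eq_image_edgeSet,
    Nat.card_image_of_injective Subtype.val_injective]
  exact Nat.card_congr (Equiv.subtypeEquivRight fun e ↦ hf e v)

theorem IsEndMap.colorsAt_extend {f : G.edgeSet → s} (hf : IsEndMap G s f) (γ : G.edgeSet → ℕ)
    (v : s) : colorsAt G (extend Subtype.val γ 0) v = γ '' {e | f e = v} := by
  rw [colorsAt, incidenceSet_eq_image_edgeSet, Set.image_image]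
  simp only [Subtype.val_injective.extend_apply, hf _ v]

theorem isProperEdgeColoring_extend {f : G.edgeSet → s} {g : G.edgeSet → ↑sᶜ}
    (hf : IsEndMap G s f) (hg : IsEndMap G sᶜ g) {γ : G.edgeSet → ℕ} {n : ℕ}
    (hγ : ∀ e, γ e ∈ Set.Icc 1 n) (hfγ : IsProperAlong f γ) (hgγ : IsProperAlong g γ) :
    IsProperEdgeColoring G n (extend Subtype.val γ 0) := by
  refine ⟨fun e he ↦ ?_, fun e he e' he' hne ⟨v, hv, hv'⟩ ↦ ?_⟩
  · simpa only [Subtype.val_injective.extend_apply γ 0 ⟨e, he⟩] using hγ ⟨e, he⟩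
  · rw [Subtype.val_injective.extend_apply γ 0 ⟨e, he⟩,
      Subtype.val_injective.extend_apply γ 0 ⟨e', he'⟩]
    have hne' : (⟨e, he⟩ : G.edgeSet) ≠ ⟨e', he'⟩ := fun h ↦ hne (congrArg Subtype.val h)
    by_cases hvs : v ∈ s
    · exact hfγ.ne hne' (((hf _ ⟨v, hvs⟩).2 hv).trans ((hf _ ⟨v, hvs⟩).2 hv').symm)
    · exact hgγ.ne hne' (((hg _ ⟨v, hvs⟩).2 hv).trans ((hg _ ⟨v, hvs⟩).2 hv').symm)

end BipartiteGraph

theorem stmt_11_general {V : Type*} [Fintype V] (G : SimpleGraph V) [DecidableRel G.Adj]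
    {X : Set V} (hX : G.IsBipartiteWith X Xᶜ) (h3 : ∀ v ∈ X, G.degree v = 3)
    (h56 : ∀ v ∉ X, G.degree v = 5 ∨ G.degree v = 6) :
    ∃ c : Sym2 V → ℕ, IsCyclicIntervalColoring G 6 c := by
  obtain ⟨f, hf⟩ := exists_isEndMap hX
  obtain ⟨g, hg⟩ := exists_isEndMap hX.symm
  have hf3 (v) : Nat.card {e // f e = v} = 3 := by rw [hf.card_fiber, h3 v v.2]
  have hg56 (v) : Nat.card {e // g e = v} = 5 ∨ Nat.card {e // g e = v} = 6 := by
    simpa only [hg.card_fiber] using h56 v v.2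
  obtain ⟨c, d, hc, hcd, hgcd⟩ := exists_class_bit_coloring (g := g) (fun v ↦ (hf3 v).le)
    fun v ↦ by have := hg56 v; omega
  let γ : G.edgeSet → ℕ := fun e ↦ palette (c e) (d e)
  have hγ (e) : γ e ∈ Set.Icc 1 6 := palette_mem_Icc (c e) (d e)
  have hfγ : IsProperAlong f γ := (hc.of_fst d).comp palette_injective
  have hgγ : IsProperAlong g γ := hgcd.comp palette_injective
  refine ⟨extend Subtype.val γ 0, isProperEdgeColoring_extend hf hg hγ hfγ hgγ, fun v ↦ ?_⟩
  by_cases hv : v ∈ X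
  · rw [hf.colorsAt_extend γ ⟨v, hv⟩]
    exact hc.isIntervalSet_image_palette_or_compl hcd (hf3 ⟨v, hv⟩)
  · rw [hg.colorsAt_extend γ ⟨v, hv⟩]
    refine .inr (isIntervalSet_Icc_sdiff (Set.image_subset_iff.2 fun e _ ↦ hγ e) ?_)
    rw [hgγ.ncard_image_fiber]
    have := hg56 ⟨v, hv⟩
    omega

/-- every finite `(3,5)`-biregular graph has a cyclic interval `t`-coloring
for some `t ≤ 6`. -/
theorem stmt_11 {V : Type*} [Fintype V] (G : SimpleGraph V) [DecidableRel G.Adj]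
    (hbireg : IsBiregular G 3 5) :
    ∃ t : ℕ, t ≤ 6 ∧ ∃ c : Sym2 V → ℕ, IsCyclicIntervalColoring G t c := by
  obtain ⟨X, -, -, hX, h3, h5⟩ := hbireg
  have hbip : G.IsBipartiteWith X Xᶜ := ⟨disjoint_compl_right, fun u v huv ↦ by
    have := hX u v huv
    by_cases hu : u ∈ X <;> simp_all⟩
  exact ⟨6, le_rfl, stmt_11_general G hbip h3 fun v hv ↦ .inl (h5 v hv)⟩
end
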